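/- arXiv:2403.19858 — 5 statements merged into one kernel-verified Lean document; each statement's English description precedes it below -/
import Mathlib

section
/- Let A₁, A₂ ≥ 0 and let u : ℝᵈ × [0,1] → ℝᵈ be differentiable in x, with x ↦ u(x,t) Lipschitz with constant A₁ and x ↦ ∇ₓu(x,t) Lipschitz with constant A₂, uniformly in t ∈ [0,1]. Let ε ≥ 0 and let g : [0,1] → ℝᵈ be a continuous path with |g(s)| ≤ ε for all s. Let X, Y solve the perturbed integral equations X_t = x + ∫₀ᵗ u(X_s,s) ds + g(t), Y_t = y + ∫₀ᵗ u(Y_s,s) ds + g(t), and let X⁰, Y⁰ solve the unperturbed equations X⁰_t = x + ∫₀ᵗ u(X⁰_s,s) ds, Y⁰_t = y + ∫₀ᵗ u(Y⁰_s,s) ds. Then there exists a constant C₁, depending only on A₁ and A₂ (not on x, y, ε, g), such that |X₁ - Y₁ - (X⁰₁ - Y⁰₁)| ≤ C₁ (ε + |x - y|) |X⁰₁ - Y⁰₁|. (This is the pathwise content of Lemma 4.3 on the event {W₁* ≤ α} with ε = α√κ.) -/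
open MeasureTheory Set

/-!
The bound `|Y - Y⁰| ≤ ε e^{A₁ t}` comes from Grönwall's inequality forward from time `0`, and
`|X⁰ - Y⁰| ≤ |X⁰₁ - Y⁰₁| e^{A₁ (1 - t)}` from Grönwall's inequality backward from time `1`. In
`X - Y - (X⁰ - Y⁰)` both the initial points and the perturbations cancel, and a four-point estimate
for maps with Lipschitz derivative bounds the integrand by `A₁` times the quantity itself plus
`A₂ |Y - Y⁰| |X⁰ - Y⁰| ≤ A₂ ε e^{A₁} |X⁰₁ - Y⁰₁|`, the two exponentials combining to one that does
not depend on `t`. A third application of Grönwall's inequality concludes.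
-/

open scoped NNReal

section FourPoints

variable {E F : Type*} [NormedAddCommGroup E] [NormedSpace ℝ E] [NormedAddCommGroup F]
  [NormedSpace ℝ F] {f : E → F} {f' : E → E →L[ℝ] F} {K₁ K₂ : ℝ≥0}

lemma norm_sub_sub_sub_add_le_of_lipschitzWith_fderiv (hf : ∀ z, HasFDerivAt f (f' z) z)
    (hf' : LipschitzWith K₂ f') (p q w : E) :
    ‖f (p + w) - f p - (f (q + w) - f q)‖ ≤ K₂ * ‖p - q‖ * ‖w‖ := by
  have hasFDerivAt_translate (r z : E) : HasFDerivAt (fun z => f (r + z)) (f' (r + z)) z :=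
    (hf (r + z)).comp z ((hasFDerivAt_id z).const_add r)
  have norm_fderiv_le (z : E) : ‖f' (p + z) - f' (q + z)‖ ≤ K₂ * ‖p - q‖ := by
    simpa only [add_sub_add_right_eq_sub] using hf'.norm_sub_le (p + z) (q + z)
  have mean_value : ‖f (p + w) - f (q + w) - (f (p + 0) - f (q + 0))‖ ≤
      K₂ * ‖p - q‖ * ‖w - 0‖ :=
    convex_univ.norm_image_sub_le_of_norm_hasFDerivWithin_le
      (fun z _ => ((hasFDerivAt_translate p z).sub (hasFDerivAt_translate q z)).hasFDerivWithinAt)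
      (fun z _ => norm_fderiv_le z) (mem_univ 0) (mem_univ w)
  rwa [add_zero, add_zero, sub_zero, sub_sub_sub_comm] at mean_value

lemma norm_sub_sub_sub_le_of_lipschitzWith_fderiv (hf : ∀ z, HasFDerivAt f (f' z) z)
    (hf₁ : LipschitzWith K₁ f) (hf' : LipschitzWith K₂ f') (p q p' q' : E) :
    ‖f p - f q - (f p' - f q')‖ ≤
      K₁ * ‖p - q - (p' - q')‖ + K₂ * (‖q - q'‖ * ‖p' - q'‖) := by
  -- `q + (p' - q')` is the fourth vertex of the parallelogram spanned by `q'`, `p'` and `q`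
  have lipschitz_part : ‖f p - f (q + (p' - q'))‖ ≤ K₁ * ‖p - q - (p' - q')‖ := by
    simpa only [sub_sub] using hf₁.norm_sub_le p (q + (p' - q'))
  have parallelogram_part := norm_sub_sub_sub_add_le_of_lipschitzWith_fderiv hf hf' q q' (p' - q')
  rw [add_sub_cancel, mul_assoc] at parallelogram_part
  calc ‖f p - f q - (f p' - f q')‖
      = ‖(f p - f (q + (p' - q'))) + (f (q + (p' - q')) - f q - (f p' - f q'))‖ := by
        congr 1; abel
    _ ≤ _ := (norm_add_le _ _).trans (add_le_add lipschitz_part parallelogram_part)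

end FourPoints

section Gronwall

variable {a b δ K ε : ℝ}

lemma gronwallBound_zero_le_mul_exp {x : ℝ} (hK : 0 ≤ K) (hε : 0 ≤ ε) :
    gronwallBound 0 K ε x ≤ ε * (x * Real.exp (K * x)) := by
  obtain rfl | hK₀ := hK.eq_or_lt
  · simp [gronwallBound_K0]
  have exp_sub_one_le : Real.exp (K * x) - 1 ≤ K * x * Real.exp (K * x) := by
    have := mul_le_mul_of_nonneg_right (Real.one_sub_le_exp_neg (K * x)) (Real.exp_nonneg (K * x))
    rw [← Real.exp_add, neg_add_cancel, Real.exp_zero] at this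
    linarith
  calc gronwallBound 0 K ε x = ε / K * (Real.exp (K * x) - 1) := by
        simp [gronwallBound_of_K_ne_0 hK₀.ne']
    _ ≤ ε / K * (K * x * Real.exp (K * x)) := by gcongr
    _ = ε * (x * Real.exp (K * x)) := by field_simp

lemma le_gronwallBound_of_le_integral {f : ℝ → ℝ} (hK : 0 ≤ K) (hf : ContinuousOn f (Icc a b))
    (h : ∀ t ∈ Icc a b, f t ≤ δ + ∫ s in a..t, (K * f s + ε)) :
    ∀ t ∈ Icc a b, f t ≤ gronwallBound δ K ε (t - a) := by
  intro t ht
  have hab : a ≤ b := ht.1.trans ht.2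
  set φ : ℝ → ℝ := fun s => K * f s + ε
  have hφ : ContinuousOn φ (Icc a b) := (hf.const_mul K).add continuousOn_const
  have hφ_int {c : ℝ} (hc : c ∈ Icc a b) : IntervalIntegrable φ volume a c :=
    (hφ.mono (Icc_subset_Icc_right hc.2)).intervalIntegrable_of_Icc hc.1
  have primitive_continuousOn : ContinuousOn (fun c => δ + ∫ s in a..c, φ s) (Icc a b) := by
    rw [← uIcc_of_le hab]
    exact continuousOn_const.add (intervalIntegral.continuousOn_primitive_interval'
      (hφ_int (right_mem_Icc.2 hab)) left_mem_uIcc)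
  have primitive_hasDerivWithinAt (c : ℝ) (hc : c ∈ Ico a b) :
      HasDerivWithinAt (fun c => δ + ∫ s in a..c, φ s) (φ c) (Ici c) c := by
    have hc' : c ∈ Icc a b := Ico_subset_Icc_self hc
    have Icc_mem : Icc a b ∈ nhdsWithin c (Ioi c) :=
      Filter.mem_of_superset (Icc_mem_nhdsGT hc.2) (Icc_subset_Icc_left hc.1)
    exact (intervalIntegral.integral_hasDerivWithinAt_right (t := Ioi c) (hφ_int hc')
      ⟨Icc a b, Icc_mem, hφ.aestronglyMeasurable measurableSet_Icc⟩
      ((hφ c hc').mono_of_mem_nhdsWithin Icc_mem)).const_add δ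
  refine (h t ht).trans (le_gronwallBound_of_liminf_deriv_right_le primitive_continuousOn
    (fun c hc _ => (primitive_hasDerivWithinAt c hc).liminf_right_slope_le) (by simp) ?_ t ht)
  intro c hc
  exact add_le_add (mul_le_mul_of_nonneg_left (h c (Ico_subset_Icc_self hc)) hK) le_rfl

variable {E : Type*} [NormedAddCommGroup E] [NormedSpace ℝ E] {v : ℝ → E}

lemma add_norm_integral_le_gronwallBound (hK : 0 ≤ K) (hv : IntervalIntegrable v volume a b)
    (h : ∀ t ∈ Icc a b, ‖v t‖ ≤ K * (δ + ‖∫ s in a..t, v s‖) + ε) :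
    ∀ t ∈ Icc a b, δ + ‖∫ s in a..t, v s‖ ≤ gronwallBound δ K ε (t - a) := by
  intro t₀ ht₀
  have hf : ContinuousOn (fun t => δ + ‖∫ s in a..t, v s‖) (Icc a b) := by
    rw [← uIcc_of_le (ht₀.1.trans ht₀.2)]
    exact continuousOn_const.add
      (intervalIntegral.continuousOn_primitive_interval' hv left_mem_uIcc).norm
  refine le_gronwallBound_of_le_integral hK hf (fun t ht => ?_) t₀ ht₀
  gcongr
  refine intervalIntegral.norm_integral_le_of_norm_le ht.1
    (.of_forall fun s hs => h s ⟨hs.1.le, hs.2.trans ht.2⟩) ?_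
  exact ((hf.mono (Icc_subset_Icc_right ht.2)).const_mul K |>.add
    continuousOn_const).intervalIntegrable_of_Icc ht.1

lemma add_norm_integral_le_gronwallBound_left (hK : 0 ≤ K) (hv : IntervalIntegrable v volume a b)
    (h : ∀ t ∈ Icc a b, ‖v t‖ ≤ K * (δ + ‖∫ s in t..b, v s‖) + ε) :
    ∀ t ∈ Icc a b, δ + ‖∫ s in t..b, v s‖ ≤ gronwallBound δ K ε (b - t) := by
  have reflect_mem {t : ℝ} (ht : t ∈ Icc a b) : a + b - t ∈ Icc a b :=
    ⟨by linarith [ht.2], by linarith [ht.1]⟩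
  have integral_reflect (t : ℝ) : ∫ s in a..t, v (a + b - s) = ∫ s in (a + b - t)..b, v s := by
    rw [intervalIntegral.integral_comp_sub_left, add_sub_cancel_left]
  have reflect_intervalIntegrable : IntervalIntegrable (fun s => v (a + b - s)) volume a b := by
    simpa using (hv.comp_sub_left (a + b)).symm
  intro t ht
  have reflected := add_norm_integral_le_gronwallBound (δ := δ) (ε := ε) hK
    reflect_intervalIntegrable
    (fun r hr => by simpa only [integral_reflect] using h _ (reflect_mem hr)) _ (reflect_mem ht)
  rwa [integral_reflect, sub_sub_cancel, show a + b - t - a = b - t by ring] at reflected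

end Gronwall

section IntegralEquation

variable {E : Type*} [NormedAddCommGroup E] [NormedSpace ℝ E]

/-- `X` solves on `[a, b]` the integral equation `X t = x + ∫ s in a..t, u (X s) s + g t`, that is,
the ODE driven by `u` and started at `x`, perturbed by the path `g`. The unperturbed equation is the
case `g = 0`. Integrability is part of the notion, because the integral of a non-integrable function
is `0` by convention. -/
structure IsPerturbedSolution (u : E → ℝ → E) (x : E) (g : ℝ → E) (a b : ℝ) (X : ℝ → E) :
    Prop where
  intervalIntegrable : IntervalIntegrable (fun s => u (X s) s) volume a b
  eq_add_integral_add : ∀ t ∈ Icc a b, X t = x + (∫ s in a..t, u (X s) s) + g t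

namespace IsPerturbedSolution

variable {u : E → ℝ → E} {x y : E} {g h : ℝ → E} {a b t : ℝ} {X Y : ℝ → E} {K : ℝ≥0}

lemma intervalIntegrable_sub (hX : IsPerturbedSolution u x g a b X)
    (hY : IsPerturbedSolution u y h a b Y) :
    IntervalIntegrable (fun s => u (X s) s - u (Y s) s) volume a b :=
  hX.intervalIntegrable.sub hY.intervalIntegrable

lemma sub_eq_add_integral_add (hX : IsPerturbedSolution u x g a b X)
    (hY : IsPerturbedSolution u y h a b Y) (ht : t ∈ Icc a b) :
    X t - Y t = (x - y) + (∫ s in a..t, (u (X s) s - u (Y s) s)) + (g t - h t) := by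
  have hsub : uIcc a t ⊆ uIcc a b := uIcc_subset_uIcc_left (Icc_subset_uIcc ht)
  rw [intervalIntegral.integral_sub (hX.intervalIntegrable.mono_set hsub)
    (hY.intervalIntegrable.mono_set hsub), hX.eq_add_integral_add t ht,
    hY.eq_add_integral_add t ht]
  abel

lemma norm_sub_le_mul_exp {ε : ℝ} (hu : ∀ t ∈ Icc a b, LipschitzWith K (u · t))
    (hX : IsPerturbedSolution u x g a b X) (hY : IsPerturbedSolution u x h a b Y)
    (hgh : ∀ t ∈ Icc a b, ‖g t - h t‖ ≤ ε) (ht : t ∈ Icc a b) :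
    ‖X t - Y t‖ ≤ ε * Real.exp (K * (t - a)) := by
  have norm_sub_le_add {t : ℝ} (ht : t ∈ Icc a b) :
      ‖X t - Y t‖ ≤ ε + ‖∫ s in a..t, (u (X s) s - u (Y s) s)‖ := by
    rw [hX.sub_eq_add_integral_add hY ht, sub_self, zero_add, add_comm]
    exact (norm_add_le _ _).trans (by gcongr; exact hgh t ht)
  calc ‖X t - Y t‖ ≤ ε + ‖∫ s in a..t, (u (X s) s - u (Y s) s)‖ := norm_sub_le_add ht
    _ ≤ gronwallBound ε K 0 (t - a) := by
        refine add_norm_integral_le_gronwallBound K.coe_nonneg (hX.intervalIntegrable_sub hY)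
          (fun s hs => ?_) t ht
        rw [add_zero]
        exact ((hu s hs).norm_sub_le _ _).trans (by gcongr; exact norm_sub_le_add hs)
    _ = ε * Real.exp (K * (t - a)) := gronwallBound_ε0 _ _ _

lemma norm_sub_le_norm_sub_right_mul_exp (hu : ∀ t ∈ Icc a b, LipschitzWith K (u · t))
    (hX : IsPerturbedSolution u x g a b X) (hY : IsPerturbedSolution u y g a b Y)
    (ht : t ∈ Icc a b) :
    ‖X t - Y t‖ ≤ ‖X b - Y b‖ * Real.exp (K * (b - t)) := by
  have hb : b ∈ Icc a b := right_mem_Icc.2 (ht.1.trans ht.2)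
  have norm_sub_le_add {t : ℝ} (ht : t ∈ Icc a b) :
      ‖X t - Y t‖ ≤ ‖X b - Y b‖ + ‖∫ s in t..b, (u (X s) s - u (Y s) s)‖ := by
    have sub_eq : X t - Y t = X b - Y b - ∫ s in t..b, (u (X s) s - u (Y s) s) := by
      have hXY := hX.intervalIntegrable_sub hY
      rw [← intervalIntegral.integral_interval_sub_left hXY
        (hXY.mono_set (uIcc_subset_uIcc_left (Icc_subset_uIcc ht))),
        hX.sub_eq_add_integral_add hY ht, hX.sub_eq_add_integral_add hY hb]
      abel
    exact sub_eq ▸ norm_sub_le _ _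
  calc ‖X t - Y t‖ ≤ ‖X b - Y b‖ + ‖∫ s in t..b, (u (X s) s - u (Y s) s)‖ := norm_sub_le_add ht
    _ ≤ gronwallBound ‖X b - Y b‖ K 0 (b - t) := by
        refine add_norm_integral_le_gronwallBound_left K.coe_nonneg (hX.intervalIntegrable_sub hY)
          (fun s hs => ?_) t ht
        rw [add_zero]
        exact ((hu s hs).norm_sub_le _ _).trans (by gcongr; exact norm_sub_le_add hs)
    _ = ‖X b - Y b‖ * Real.exp (K * (b - t)) := gronwallBound_ε0 _ _ _

lemma norm_sub_mul_norm_sub_le_mul_exp {Y₀ : ℝ → E} {ε : ℝ}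
    (hu : ∀ t ∈ Icc a b, LipschitzWith K (u · t))
    (hX : IsPerturbedSolution u x h a b X) (hY : IsPerturbedSolution u y g a b Y)
    (hY₀ : IsPerturbedSolution u y h a b Y₀) (hgh : ∀ t ∈ Icc a b, ‖g t - h t‖ ≤ ε)
    (ht : t ∈ Icc a b) :
    ‖Y t - Y₀ t‖ * ‖X t - Y₀ t‖ ≤ ε * ‖X b - Y₀ b‖ * Real.exp (K * (b - a)) := by
  have hε : 0 ≤ ε := (norm_nonneg _).trans (hgh t ht)
  calc ‖Y t - Y₀ t‖ * ‖X t - Y₀ t‖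
      ≤ ε * Real.exp (K * (t - a)) * (‖X b - Y₀ b‖ * Real.exp (K * (b - t))) := by
        gcongr
        · exact hY.norm_sub_le_mul_exp hu hY₀ hgh ht
        · exact hX.norm_sub_le_norm_sub_right_mul_exp hu hY₀ ht
    _ = ε * ‖X b - Y₀ b‖ * Real.exp (K * (b - a)) := by
        rw [mul_mul_mul_comm, ← Real.exp_add]; ring_nf

lemma sub_sub_sub_eq_integral {X₀ Y₀ : ℝ → E} (hX : IsPerturbedSolution u x g a b X)
    (hY : IsPerturbedSolution u y g a b Y) (hX₀ : IsPerturbedSolution u x h a b X₀)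
    (hY₀ : IsPerturbedSolution u y h a b Y₀) (ht : t ∈ Icc a b) :
    X t - Y t - (X₀ t - Y₀ t) =
      ∫ s in a..t, (u (X s) s - u (Y s) s - (u (X₀ s) s - u (Y₀ s) s)) := by
  have hsub : uIcc a t ⊆ uIcc a b := uIcc_subset_uIcc_left (Icc_subset_uIcc ht)
  rw [intervalIntegral.integral_sub ((hX.intervalIntegrable_sub hY).mono_set hsub)
    ((hX₀.intervalIntegrable_sub hY₀).mono_set hsub), hX.sub_eq_add_integral_add hY ht,
    hX₀.sub_eq_add_integral_add hY₀ ht]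
  abel

end IsPerturbedSolution

theorem fourTermsDiff_general [CompleteSpace E] {u : E → ℝ → E} {Du : E → ℝ → E →L[ℝ] E}
    {A₁ A₂ : ℝ≥0} {x y : E} {g g₀ : ℝ → E} {a b ε : ℝ} {X Y X₀ Y₀ : ℝ → E} (hab : a ≤ b)
    (hDu : ∀ t ∈ Icc a b, ∀ z, HasFDerivAt (u · t) (Du z t) z)
    (hu : ∀ t ∈ Icc a b, LipschitzWith A₁ (u · t))
    (hDu_lip : ∀ t ∈ Icc a b, LipschitzWith A₂ (Du · t))
    (hg : ∀ t ∈ Icc a b, ‖g t - g₀ t‖ ≤ ε)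
    (hX : IsPerturbedSolution u x g a b X) (hY : IsPerturbedSolution u y g a b Y)
    (hX₀ : IsPerturbedSolution u x g₀ a b X₀) (hY₀ : IsPerturbedSolution u y g₀ a b Y₀) :
    ‖X b - Y b - (X₀ b - Y₀ b)‖ ≤
      A₂ * (b - a) * Real.exp (A₁ * (b - a)) ^ 2 * ε * ‖X₀ b - Y₀ b‖ := by
  have hb : b ∈ Icc a b := right_mem_Icc.2 hab
  have hε : 0 ≤ ε := (norm_nonneg _).trans (hg b hb)
  set η : ℝ := A₂ * (ε * ‖X₀ b - Y₀ b‖ * Real.exp (A₁ * (b - a)))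
  have integrand_le (s : ℝ) (hs : s ∈ Icc a b) :
      ‖u (X s) s - u (Y s) s - (u (X₀ s) s - u (Y₀ s) s)‖ ≤
        A₁ * (0 + ‖∫ r in a..s, (u (X r) r - u (Y r) r - (u (X₀ r) r - u (Y₀ r) r))‖) + η := by
    rw [zero_add, ← hX.sub_sub_sub_eq_integral hY hX₀ hY₀ hs]
    refine (norm_sub_sub_sub_le_of_lipschitzWith_fderiv (hDu s hs) (hu s hs) (hDu_lip s hs)
      (X s) (Y s) (X₀ s) (Y₀ s)).trans ?_
    gcongr
    exact mul_le_mul_of_nonneg_left (hX₀.norm_sub_mul_norm_sub_le_mul_exp hu hY hY₀ hg hs)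
      A₂.coe_nonneg
  have gronwall := add_norm_integral_le_gronwallBound A₁.coe_nonneg
    ((hX.intervalIntegrable_sub hY).sub (hX₀.intervalIntegrable_sub hY₀)) integrand_le b hb
  rw [zero_add, ← hX.sub_sub_sub_eq_integral hY hX₀ hY₀ hb] at gronwall
  calc ‖X b - Y b - (X₀ b - Y₀ b)‖ ≤ η * ((b - a) * Real.exp (A₁ * (b - a))) :=
        gronwall.trans (gronwallBound_zero_le_mul_exp A₁.coe_nonneg (by positivity))
    _ = A₂ * (b - a) * Real.exp (A₁ * (b - a)) ^ 2 * ε * ‖X₀ b - Y₀ b‖ := by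
        simp only [η]; ring

end IntegralEquation

/-- pathwise content of Lemma 4.3: if `X, Y` solve the integral
equation perturbed by a common path `g` with `|g| ≤ ε`, and `X⁰, Y⁰` solve the
unperturbed equation from the same initial points `x, y`, then the difference of
differences at time one is controlled by `C₁ (ε + |x-y|) |X⁰₁ - Y⁰₁|`, where `C₁`
depends only on the Lipschitz constants `A₁` of `u(·,t)` and `A₂` of `∇ₓu(·,t)`. -/
theorem fourTermsDiff (A₁ A₂ : ℝ) (hA₁ : 0 ≤ A₁) (hA₂ : 0 ≤ A₂) :
    ∃ C₁ : ℝ, 0 < C₁ ∧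
      ∀ (d : ℕ) (u : EuclideanSpace ℝ (Fin d) → ℝ → EuclideanSpace ℝ (Fin d))
        (Du : EuclideanSpace ℝ (Fin d) → ℝ →
          (EuclideanSpace ℝ (Fin d) →L[ℝ] EuclideanSpace ℝ (Fin d))),
        Measurable (fun p : EuclideanSpace ℝ (Fin d) × ℝ => u p.1 p.2) →
        (∀ t ∈ Icc (0 : ℝ) 1, ∀ z, HasFDerivAt (fun w => u w t) (Du z t) z) →
        (∀ t ∈ Icc (0 : ℝ) 1, LipschitzWith A₁.toNNReal (fun z => u z t)) →
        (∀ t ∈ Icc (0 : ℝ) 1, LipschitzWith A₂.toNNReal (fun z => Du z t)) →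
        ∀ (ε : ℝ), 0 ≤ ε →
        ∀ (g : ℝ → EuclideanSpace ℝ (Fin d)), ContinuousOn g (Icc (0 : ℝ) 1) →
        (∀ s ∈ Icc (0 : ℝ) 1, ‖g s‖ ≤ ε) →
        ∀ (x y : EuclideanSpace ℝ (Fin d)) (X Y X0 Y0 : ℝ → EuclideanSpace ℝ (Fin d)),
        IntervalIntegrable (fun s => u (X s) s) volume 0 1 →
        IntervalIntegrable (fun s => u (Y s) s) volume 0 1 →
        IntervalIntegrable (fun s => u (X0 s) s) volume 0 1 →
        IntervalIntegrable (fun s => u (Y0 s) s) volume 0 1 →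
        (∀ t ∈ Icc (0 : ℝ) 1, X t = x + (∫ s in (0 : ℝ)..t, u (X s) s) + g t) →
        (∀ t ∈ Icc (0 : ℝ) 1, Y t = y + (∫ s in (0 : ℝ)..t, u (Y s) s) + g t) →
        (∀ t ∈ Icc (0 : ℝ) 1, X0 t = x + (∫ s in (0 : ℝ)..t, u (X0 s) s)) →
        (∀ t ∈ Icc (0 : ℝ) 1, Y0 t = y + (∫ s in (0 : ℝ)..t, u (Y0 s) s)) →
        ‖X 1 - Y 1 - (X0 1 - Y0 1)‖ ≤ C₁ * (ε + ‖x - y‖) * ‖X0 1 - Y0 1‖ := by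
  lift A₁ to ℝ≥0 using hA₁
  lift A₂ to ℝ≥0 using hA₂
  simp only [Real.toNNReal_coe]
  refine ⟨A₂ * Real.exp A₁ ^ 2 + 1, by positivity, ?_⟩
  intro d u Du _ hDu hu hDu_lip ε hε g _ hg x y X Y X₀ Y₀ iX iY iX₀ iY₀ hX hY hX₀ hY₀
  have general := fourTermsDiff_general zero_le_one hDu hu hDu_lip (g₀ := 0) (by simpa using hg)
    ⟨iX, hX⟩ ⟨iY, hY⟩ ⟨iX₀, by simpa using hX₀⟩ ⟨iY₀, by simpa using hY₀⟩
  refine general.trans ?_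
  simp only [sub_zero, mul_one]
  gcongr <;> linarith [norm_nonneg (x - y)]
end

section
/- (Lemma 6.2) Let r > 0 and let f : B_r ⊆ ℝᴺ → ℝᵈ be a C¹ function with f(0) = 0 and rank(Df(0)) = d. Then there exist δ > 0 and s > 0 such that for every Lipschitz function g : ℝᴺ → ℝᵈ with sup_{x ∈ B_r} |f(x) - g(x)| ≤ δ, one has g(B_r) ⊇ B_s. Here B_r denotes the open ball of radius r centered at the origin (in ℝᴺ on the left, in ℝᵈ on the right). -/
open Metric

/-!
Brouwer's fixed point theorem makes continuous maps that are uniformly close to the identity of a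
ball cover a smaller ball; a continuous right inverse of the derivative reduces the case of a
submersion to this one.

Brouwer's theorem is proved by the Milnor–Rogers argument. Suppose `r` is a `C¹` map of the ball
equal to the identity on the sphere, and put `φ = r - id`, extended by zero. For small `t` the map
`id + t φ` is a bijection of the ball, so `∫ det (1 + t Dφ)` is the volume of the ball. This
integral is polynomial in `t`, so the same holds for `t = 1`: `∫ det Dr` is the volume of the ball.
If `r` took values in the sphere, `det Dr` would vanish identically.
-/

open MeasureTheory Set Filter Topology
open scoped NNReal ContDiff

section Determinant

open Polynomial in
theorem exists_polynomial_eval_eq_det_one_add_smul {R M : Type*} [CommRing R] [Nontrivial R]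
    [AddCommGroup M] [Module R M] [Module.Free R M] [Module.Finite R M] (A : M →ₗ[R] M) :
    ∃ p : R[X], p.natDegree ≤ Module.finrank R M ∧ ∀ t, p.eval t = LinearMap.det (1 + t • A) := by
  classical
  let b := Module.Free.chooseBasis R M
  let A' := LinearMap.toMatrix b b A
  refine ⟨((X : R[X]) • A'.map C + (1 : Matrix _ _ R).map C).det, ?_, fun t => ?_⟩
  · rw [Module.finrank_eq_card_chooseBasisIndex]
    exact natDegree_det_X_add_C_le A' 1
  · rw [← LinearMap.det_toMatrix b, map_add, map_smul, LinearMap.toMatrix_one, add_comm,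
      ← coe_evalRingHom, RingHom.map_det]
    congr 1
    ext i j
    simp [A', Matrix.one_apply, apply_ite, mul_comm t]

variable {E : Type*} [NormedAddCommGroup E] [NormedSpace ℝ E] [FiniteDimensional ℝ E]

theorem det_one_add_pos_of_norm_lt_one {A : E →L[ℝ] E} (hA : ‖A‖ < 1) : 0 < (1 + A).det := by
  have : CompleteSpace E := FiniteDimensional.complete ℝ E
  have hne : ∀ B ∈ ball (0 : E →L[ℝ] E) 1, (1 + B).det ≠ 0 := by
    intro B hB
    have hunit : IsUnit (1 + B) := by
      rw [← sub_neg_eq_add]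
      exact isUnit_one_sub_of_norm_lt_one (by rwa [norm_neg, ← mem_ball_zero_iff])
    exact (LinearMap.isUnit_det _ (hunit.map ContinuousLinearMap.toLinearMapRingHom)).ne_zero
  have hcont : Continuous fun B : E →L[ℝ] E => (1 + B).det :=
    ContinuousLinearMap.continuous_det.comp (by fun_prop)
  by_contra! hneg
  have h0 : (1 + 0 : E →L[ℝ] E).det = 1 := by
    rw [add_zero]
    exact LinearMap.det_id
  obtain ⟨B, hB, hB0⟩ := (convex_ball (0 : E →L[ℝ] E) 1).isPreconnected.intermediate_value
    (mem_ball_zero_iff.2 hA) (mem_ball_self one_pos) hcont.continuousOn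
    ⟨hneg, h0.symm ▸ zero_le_one⟩
  exact hne B hB hB0

end Determinant

open Polynomial in
theorem integral_eq_of_polynomial_of_infinite {α 𝕜 : Type*} [RCLike 𝕜] [MeasurableSpace α]
    {μ : Measure α} {f : 𝕜 → α → 𝕜} {n : ℕ} {c : 𝕜} {S : Set 𝕜} (hS : S.Infinite)
    (hpoly : ∀ x, ∃ p : 𝕜[X], p.natDegree ≤ n ∧ ∀ t, p.eval t = f t x)
    (hint : ∀ t ∈ S, Integrable (f t) μ) (hc : ∀ t ∈ S, ∫ x, f t x ∂μ = c) (t : 𝕜) :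
    ∫ x, f t x ∂μ = c := by
  classical
  obtain ⟨T, hTS, hT⟩ := hS.exists_subset_card_eq (n + 1)
  let w (v : 𝕜) : 𝕜 := (Lagrange.basis T id v).eval t
  have hinterp : ∀ x, f t x = ∑ v ∈ T, f v x * w v := by
    intro x
    obtain ⟨p, hdeg, heval⟩ := hpoly x
    have hlt : p.degree < T.card := by
      rw [hT]
      exact degree_le_natDegree.trans_lt (by exact_mod_cast Nat.lt_succ_of_le hdeg)
    rw [← heval, Lagrange.eq_interpolate (v := id) (injOn_id _) hlt, Lagrange.interpolate_apply,
      eval_finsetSum]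
    simp only [eval_mul, eval_C, id_eq, heval, w]
  have hw : ∑ v ∈ T, w v = 1 := by
    have hne : T.Nonempty := Finset.card_pos.1 (hT ▸ n.succ_pos)
    rw [← eval_finsetSum, Lagrange.sum_basis (injOn_id _) hne, eval_one]
  calc ∫ x, f t x ∂μ = ∑ v ∈ T, (∫ x, f v x ∂μ) * w v := by
        simp_rw [hinterp]
        rw [integral_finsetSum _ fun v hv => (hint v (hTS hv)).mul_const _]
        exact Finset.sum_congr rfl fun v _ => integral_mul_const _ _
    _ = ∑ v ∈ T, c * w v := Finset.sum_congr rfl fun v hv => by rw [hc v (hTS hv)]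
    _ = c := by rw [← Finset.mul_sum, hw, mul_one]

section LipschitzPerturbation

variable {E : Type*} [NormedAddCommGroup E] [NormedSpace ℝ E]

theorem bijective_add_of_lipschitzWith [CompleteSpace E] {φ : E → E} {K : ℝ≥0}
    (hφ : LipschitzWith K φ) (hK : K < 1) : Function.Bijective fun x => x + φ x := by
  have happrox : ApproximatesLinearOn (fun x => x + φ x)
      (ContinuousLinearEquiv.refl ℝ E : E →L[ℝ] E) univ K := by
    intro x _ y _
    change ‖x + φ x - (y + φ y) - (x - y)‖ ≤ K * ‖x - y‖
    rw [add_sub_add_comm, add_sub_cancel_left]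
    exact hφ.norm_sub_le x y
  have hK' : Subsingleton E ∨
      K < ‖((ContinuousLinearEquiv.refl ℝ E).symm : E →L[ℝ] E)‖₊⁻¹ := by
    rcases subsingleton_or_nontrivial E with hE | hE
    · exact .inl hE
    · right
      simpa using hK
  exact ⟨injOn_univ.1 (happrox.injOn hK'), happrox.surjective hK'⟩

theorem image_eq_of_bijective_of_eqOn_compl {α : Type*} {f : α → α} {s : Set α}
    (hf : Function.Bijective f) (hs : EqOn f id sᶜ) : f '' s = s := by
  rw [← compl_inj_iff, ← image_compl_eq hf, hs.image_eq, image_id]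

variable [FiniteDimensional ℝ E]

theorem lipschitzWith_indicator_of_eq_zero_on_frontier {F : Type*} [SeminormedAddCommGroup F]
    {f : E → F} {s : Set E} {K : ℝ≥0} (hs : IsClosed s) (hf : LipschitzOnWith K f s)
    (hfs : ∀ x ∈ frontier s, f x = 0) : LipschitzWith K (s.indicator f) := by
  have houtside : ∀ x ∈ s, ∀ y ∉ s, dist (f x) 0 ≤ K * dist x y := by
    intro x hx y hy
    obtain ⟨z, hz, hxz⟩ := exists_mem_frontier_infDist_compl_eq_dist hx fun h => hy (h ▸ mem_univ y)
    calc dist (f x) 0 = dist (f x) (f z) := by rw [hfs z hz]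
      _ ≤ K * dist x z := hf.dist_le_mul x hx z (hs.frontier_subset hz)
      _ ≤ K * dist x y := by
        rw [← hxz]
        gcongr
        exact infDist_le_dist_of_mem hy
  refine .of_dist_le_mul fun x y => ?_
  by_cases hx : x ∈ s <;> by_cases hy : y ∈ s <;>
    simp only [hx, hy, indicator_of_mem, indicator_of_notMem, not_false_eq_true]
  · exact hf.dist_le_mul x hx y hy
  · exact houtside x hx y hy
  · rw [dist_comm, dist_comm x]
    exact houtside y hy x hx
  · rw [dist_self]
    positivity

variable [MeasurableSpace E] [BorelSpace E] {μ : Measure E} {φ : E → E} {K : ℝ≥0} {U : Set E}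

theorem integrableOn_comp_fderiv_of_lipschitzWith {F : Type*} [NormedAddCommGroup F]
    [NormedSpace ℝ F] [FiniteDimensional ℝ F] {f : E → F} (hf : LipschitzWith K f)
    {g : (E →L[ℝ] F) → ℝ} (hg : Continuous g) (hU : μ U ≠ ⊤) :
    IntegrableOn (fun x => g (fderiv ℝ f x)) U μ := by
  have : CompleteSpace F := FiniteDimensional.complete ℝ F
  have : ProperSpace (E →L[ℝ] F) := FiniteDimensional.proper_real _
  obtain ⟨M, hM⟩ := (isCompact_closedBall (0 : E →L[ℝ] F) K).exists_bound_of_continuousOn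
    hg.continuousOn
  refine Measure.integrableOn_of_bounded hU
    (hg.measurable.comp (measurable_fderiv ℝ f)).aestronglyMeasurable (M := M) ?_
  exact .of_forall fun x => hM _ (mem_closedBall_zero_iff.2 (norm_fderiv_le_of_lipschitz ℝ hf))

variable [μ.IsAddHaarMeasure]

theorem integral_det_one_add_fderiv_of_lipschitzWith_lt_one (hφ : LipschitzWith K φ) (hK : K < 1)
    (hU : MeasurableSet U) (hdiff : ∀ x ∈ U, DifferentiableAt ℝ φ x) (hzero : ∀ x ∉ U, φ x = 0) :
    ∫ x in U, (1 + fderiv ℝ φ x).det ∂μ = μ.real U := by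
  have : CompleteSpace E := FiniteDimensional.complete ℝ E
  have hbij := bijective_add_of_lipschitzWith hφ hK
  have himage : (fun x => x + φ x) '' U = U :=
    image_eq_of_bijective_of_eqOn_compl hbij fun x hx => by simp [hzero x hx]
  have hderiv : ∀ x ∈ U, HasFDerivWithinAt (fun x => x + φ x) (1 + fderiv ℝ φ x) U x :=
    fun x hx => ((hasFDerivAt_id x).add (hdiff x hx).hasFDerivAt).hasFDerivWithinAt
  have hdet : ∀ x, |(1 + fderiv ℝ φ x).det| = (1 + fderiv ℝ φ x).det := fun x =>
    abs_of_pos <| det_one_add_pos_of_norm_lt_one <|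
      (norm_fderiv_le_of_lipschitz ℝ hφ).trans_lt (by exact_mod_cast hK)
  have hcov := integral_image_eq_integral_abs_det_fderiv_smul μ hU hderiv hbij.injective.injOn
    fun _ => (1 : ℝ)
  simpa [himage, hdet] using hcov.symm

theorem integral_det_one_add_fderiv_of_lipschitzWith (hφ : LipschitzWith K φ)
    (hU : MeasurableSet U) (hμU : μ U ≠ ⊤) (hdiff : ∀ x ∈ U, DifferentiableAt ℝ φ x)
    (hzero : ∀ x ∉ U, φ x = 0) :
    ∫ x in U, (1 + fderiv ℝ φ x).det ∂μ = μ.real U := by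
  have hpoly (x : E) := exists_polynomial_eval_eq_det_one_add_smul (fderiv ℝ φ x : E →ₗ[ℝ] E)
  have hcont (t : ℝ) : Continuous fun A : E →L[ℝ] E => (1 + t • A).det :=
    ContinuousLinearMap.continuous_det.comp (by fun_prop)
  have hsmall : ∀ t ∈ Ioo (0 : ℝ) (1 / (K + 1)),
      ∫ x in U, (1 + t • fderiv ℝ φ x).det ∂μ = μ.real U := by
    rintro t ⟨ht0, ht⟩
    have hlip : LipschitzWith (‖t‖₊ * K) (t • φ) := (lipschitzWith_smul t).comp hφ
    have hlt : ‖t‖₊ * K < 1 := by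
      rw [← NNReal.coe_lt_coe]
      push_cast
      rw [Real.norm_of_nonneg ht0.le]
      linarith [(lt_div_iff₀ (by positivity)).1 ht]
    rw [← integral_det_one_add_fderiv_of_lipschitzWith_lt_one hlip hlt hU
      (fun x hx => (hdiff x hx).const_smul t) fun x hx => by simp [hzero x hx]]
    simp_rw [fderiv_const_smul_field, Pi.smul_apply]
  have hone := integral_eq_of_polynomial_of_infinite (Ioo_infinite (by positivity)) hpoly
    (fun t _ => integrableOn_comp_fderiv_of_lipschitzWith hφ (hcont t) hμU) hsmall 1
  simp_rw [one_smul] at hone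
  exact hone

theorem integral_det_fderiv_eq_of_eqOn_frontier {C : Set E} (hC : IsCompact C) {r : E → E}
    (hr : LipschitzOnWith K r C) (hdiff : ∀ x ∈ interior C, DifferentiableAt ℝ r x)
    (hfrontier : EqOn r id (frontier C)) :
    ∫ x in interior C, (fderiv ℝ r x).det ∂μ = μ.real (interior C) := by
  let φ : E → E := C.indicator fun x => r x - x
  have hφ : LipschitzWith (K + 1) φ :=
    lipschitzWith_indicator_of_eq_zero_on_frontier hC.isClosed
      (hr.sub LipschitzWith.id.lipschitzOnWith) fun x hx => sub_eq_zero.2 (hfrontier hx)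
  have hderiv : ∀ x ∈ interior C, HasFDerivAt φ (fderiv ℝ r x - 1) x := by
    intro x hx
    refine ((hdiff x hx).hasFDerivAt.sub (hasFDerivAt_id x)).congr_of_eventuallyEq ?_
    filter_upwards [mem_interior_iff_mem_nhds.1 hx] with y hy
    exact indicator_of_mem hy _
  have hzero : ∀ x ∉ interior C, φ x = 0 := by
    intro x hx
    by_cases hxC : x ∈ C
    · exact (indicator_of_mem hxC _).trans (sub_eq_zero.2 (hfrontier ⟨subset_closure hxC, hx⟩))
    · exact indicator_of_notMem hxC _
  rw [← integral_det_one_add_fderiv_of_lipschitzWith hφ measurableSet_interior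
    (measure_mono interior_subset |>.trans_lt hC.measure_lt_top).ne
    (fun x hx => (hderiv x hx).differentiableAt) hzero]
  refine setIntegral_congr_fun measurableSet_interior fun x hx => ?_
  simp only [(hderiv x hx).fderiv, add_sub_cancel]

end LipschitzPerturbation

section Brouwer

variable {E : Type*} [NormedAddCommGroup E] [InnerProductSpace ℝ E]
  [FiniteDimensional ℝ E] {R : ℝ}

theorem det_fderiv_eq_zero_of_norm_eventually_eq {r : E → E} {x : E} (hR : R ≠ 0)
    (hdiff : DifferentiableAt ℝ r x) (hr : ∀ᶠ y in 𝓝 x, ‖r y‖ = R) :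
    (fderiv ℝ r x).det = 0 := by
  have horth : ∀ v, inner ℝ (r x) (fderiv ℝ r x v) = 0 := by
    intro v
    have hconst : (fun y => ‖r y‖ ^ 2) =ᶠ[𝓝 x] fun _ => R ^ 2 :=
      hr.mono fun y hy => by simp only [hy]
    have h := congr($(hdiff.hasFDerivAt.norm_sq.unique
      ((hasFDerivAt_const (R ^ 2) x).congr_of_eventuallyEq hconst)) v)
    simpa using h
  have hrx : r x ≠ 0 := norm_ne_zero_iff.1 (hr.self_of_nhds.symm ▸ hR)
  by_contra hdet
  obtain ⟨v, hv⟩ := (LinearMap.equivOfDetNeZero (fderiv ℝ r x : E →ₗ[ℝ] E) hdet).surjective (r x)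
  have hv' : fderiv ℝ r x v = r x := hv
  exact hrx (inner_self_eq_zero.1 (hv' ▸ horth v))

theorem exists_norm_ne_of_eqOn_sphere {r : E → E} (hR : 0 < R)
    (hr : ContDiffOn ℝ 1 r (closedBall 0 R)) (hsphere : EqOn r id (sphere 0 R)) :
    ∃ x ∈ ball (0 : E) R, ‖r x‖ ≠ R := by
  have : ProperSpace E := FiniteDimensional.proper_real E
  borelize E
  by_contra! hretract
  have hdiff : ∀ x ∈ ball (0 : E) R, DifferentiableAt ℝ r x := fun x hx =>
    (hr.differentiableOn one_ne_zero).differentiableAt (closedBall_mem_nhds_of_mem hx)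
  obtain ⟨K, hK⟩ := hr.exists_lipschitzOnWith one_ne_zero (convex_closedBall 0 R)
    (isCompact_closedBall 0 R)
  have hvol := integral_det_fderiv_eq_of_eqOn_frontier (μ := volume) (isCompact_closedBall 0 R) hK
    (by rwa [interior_closedBall _ hR.ne']) (by rwa [frontier_closedBall _ hR.ne'])
  rw [interior_closedBall _ hR.ne', setIntegral_eq_zero_of_forall_eq_zero fun x hx =>
    det_fderiv_eq_zero_of_norm_eventually_eq hR.ne' (hdiff x hx)
      (eventually_of_mem (isOpen_ball.mem_nhds hx) hretract)] at hvol
  exact (ENNReal.toReal_pos (measure_ball_pos volume 0 hR).ne' measure_ball_lt_top.ne).ne hvol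

theorem exists_eq_zero_of_eqOn_sphere {F : E → E} (hR : 0 < R)
    (hF : ContDiffOn ℝ 1 F (closedBall 0 R)) (hsphere : EqOn F id (sphere 0 R)) :
    ∃ x ∈ closedBall (0 : E) R, F x = 0 := by
  by_contra! hne
  obtain ⟨x, hx, hnorm⟩ := exists_norm_ne_of_eqOn_sphere (r := fun x => (R / ‖F x‖) • F x) hR
    ((contDiffOn_const.div (hF.norm ℝ hne) fun x hx => norm_ne_zero_iff.2 (hne x hx)).smul hF)
    fun x hx => by simp [hsphere hx, mem_sphere_zero_iff_norm.1 hx, hR.ne']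
  refine hnorm ?_
  rw [norm_smul, norm_div, norm_norm, Real.norm_of_nonneg hR.le,
    div_mul_cancel₀ _ (norm_ne_zero_iff.2 (hne x (ball_subset_closedBall hx)))]

theorem exists_isFixedPt_of_contDiff {h : E → E} {ρ : ℝ} (hρ : 0 < ρ) (hρR : ρ < R)
    (hh : ContDiff ℝ 1 h) (hmaps : MapsTo h (closedBall 0 R) (closedBall 0 ρ)) :
    ∃ x ∈ closedBall (0 : E) R, Function.IsFixedPt h x := by
  let χ : ContDiffBump (0 : E) := ⟨ρ, R, hρ, hρR⟩
  obtain ⟨x, hx, hzero⟩ := exists_eq_zero_of_eqOn_sphere (F := fun x => x - χ x • h x)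
    (hρ.trans hρR) (contDiff_id.sub (χ.contDiff.smul hh)).contDiffOn
    fun x hx => by simp [χ.zero_of_le_dist (mem_sphere.1 hx).ge]
  have hfix : x = χ x • h x := sub_eq_zero.1 hzero
  have hxρ : x ∈ closedBall 0 ρ := by
    rw [mem_closedBall_zero_iff]
    calc ‖x‖ = χ x * ‖h x‖ := by
          conv_lhs => rw [hfix, norm_smul, Real.norm_of_nonneg χ.nonneg]
      _ ≤ 1 * ρ := by gcongr; exacts [χ.le_one, mem_closedBall_zero_iff.1 (hmaps hx)]
      _ = ρ := one_mul ρ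
  refine ⟨x, hx, ?_⟩
  rw [χ.one_of_mem_closedBall hxρ, one_smul] at hfix
  exact hfix.symm

theorem exists_contDiff_forall_mem_norm_sub_lt {V F : Type*} [NormedAddCommGroup V]
    [NormedSpace ℝ V] [FiniteDimensional ℝ V] [NormedAddCommGroup F] [NormedSpace ℝ F]
    [FiniteDimensional ℝ F] {C : Set V} (hC : IsCompact C) {h : V → F} (hh : ContinuousOn h C)
    {ε : ℝ} (hε : 0 < ε) : ∃ g : V → F, ContDiff ℝ ∞ g ∧ ∀ x ∈ C, ‖g x - h x‖ < ε := by
  have : CompleteSpace F := FiniteDimensional.complete ℝ F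
  have : TietzeExtension F := .of_tvs ℝ
  obtain ⟨H, hH⟩ := ContinuousMap.exists_restrict_eq hC.isClosed ⟨C.domRestrict h, hh.domRestrict⟩
  have hHh : EqOn H h C := fun x hx => congr($hH ⟨x, hx⟩)
  obtain ⟨g, hg, hgH⟩ := (mem_closure_iff_nhds_basis (nhds_basis_uniformity
    uniformity_basis_dist.compactConvergenceUniformity)).1
      (ContinuousMap.dense_setOfPred_contDiff H) (C, ε) ⟨hC, hε⟩
  refine ⟨g, hg, fun x hx => ?_⟩
  rw [← dist_eq_norm, ← hHh hx]
  exact hgH x hx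

theorem exists_norm_sub_self_le_of_continuousOn_closedBall {h : E → E} (hR : 0 < R)
    (hh : ContinuousOn h (closedBall 0 R)) (hmaps : MapsTo h (closedBall 0 R) (closedBall 0 R))
    {ε : ℝ} (hε : 0 < ε) : ∃ x ∈ closedBall (0 : E) R, ‖h x - x‖ ≤ ε := by
  have : ProperSpace E := FiniteDimensional.proper_real E
  obtain ⟨g, hg, hgh⟩ := exists_contDiff_forall_mem_norm_sub_lt (isCompact_closedBall 0 R) hh
    (ε := ε / 3) (by positivity)
  let c := R / (R + 2 * (ε / 3))
  have hc : 0 < c := by positivity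
  have hcR : c * (R + 2 * (ε / 3)) = R := div_mul_cancel₀ _ (by positivity)
  have hg_le : ∀ x ∈ closedBall (0 : E) R, ‖g x‖ ≤ R + ε / 3 := fun x hx =>
    (norm_le_norm_add_norm_sub' _ _).trans
      (add_le_add (mem_closedBall_zero_iff.1 (hmaps hx)) (hgh x hx).le)
  obtain ⟨x, hx, hfix⟩ := exists_isFixedPt_of_contDiff (h := fun x => c • g x)
    (ρ := c * (R + ε / 3)) (R := R) (by positivity) (by nlinarith)
    ((hg.of_le (mod_cast le_top)).const_smul c) fun x hx => by
      rw [mem_closedBall_zero_iff, norm_smul, Real.norm_of_nonneg hc.le]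
      gcongr
      exact hg_le x hx
  have hgx : ‖g x - x‖ ≤ 2 * (ε / 3) := by
    have hx' : c • g x = x := hfix
    have hc1 : c ≤ 1 := (div_le_one (by positivity)).2 (by linarith)
    calc ‖g x - x‖ = ‖(1 - c) • g x‖ := by rw [sub_smul, one_smul, hx']
      _ = (1 - c) * ‖g x‖ := by rw [norm_smul, Real.norm_of_nonneg (sub_nonneg.2 hc1)]
      _ ≤ (1 - c) * (R + 2 * (ε / 3)) := by
          gcongr
          linarith [hg_le x hx]
      _ = 2 * (ε / 3) := by rw [sub_mul, hcR]; ring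
  refine ⟨x, hx, ?_⟩
  linarith [norm_sub_le_norm_sub_add_norm_sub (h x) (g x) x, hgh x hx, norm_sub_rev (g x) (h x)]

theorem exists_isFixedPt_of_continuousOn_closedBall {h : E → E} (hR : 0 < R)
    (hh : ContinuousOn h (closedBall 0 R)) (hmaps : MapsTo h (closedBall 0 R) (closedBall 0 R)) :
    ∃ x ∈ closedBall (0 : E) R, Function.IsFixedPt h x := by
  have : ProperSpace E := FiniteDimensional.proper_real E
  obtain ⟨x, hx, hmin⟩ := (isCompact_closedBall (0 : E) R).exists_isMinOn
    (nonempty_closedBall.2 hR.le) (hh.sub continuousOn_id).norm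
  have hzero : ‖h x - x‖ ≤ 0 := le_of_forall_pos_le_add fun ε hε => by
    obtain ⟨y, hy, hyε⟩ := exists_norm_sub_self_le_of_continuousOn_closedBall hR hh hmaps hε
    rw [zero_add]
    exact (hmin hy).trans hyε
  exact ⟨x, hx, sub_eq_zero.1 (norm_le_zero_iff.1 hzero)⟩

end Brouwer

section Submersion

variable {X : Type*} [NormedAddCommGroup X] [NormedSpace ℝ X] {a : X} {U : Set X}

theorem exists_ball_subset_image_of_surjective_hasFDerivAt {Y : Type*} [NormedAddCommGroup Y]
    [InnerProductSpace ℝ Y] [FiniteDimensional ℝ Y] {f : X → Y} {f' : X →L[ℝ] Y}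
    (hf : HasFDerivAt f f' a) (hf' : Function.Surjective f') (hU : U ∈ 𝓝 a) :
    ∃ δ > 0, ∃ s > 0, ∀ g : X → Y, ContinuousOn g U → (∀ x ∈ U, ‖f x - g x‖ ≤ δ) →
      ball (f a) s ⊆ g '' U := by
  obtain ⟨L, hL⟩ := f'.exists_rightInverse_of_surjective (LinearMap.range_eq_top.2 hf')
  let ℓ : Y → X := fun z => a + L z
  have hℓ0 : ℓ 0 = a := by simp [ℓ]
  have hℓ : Continuous ℓ := by fun_prop
  have hderiv : HasFDerivAt (f ∘ ℓ) (ContinuousLinearMap.id ℝ Y) 0 := by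
    rw [← hL]
    exact HasFDerivAt.comp 0 (hℓ0.symm ▸ hf) (L.hasFDerivAt.const_add a)
  have hnear : ∀ᶠ z in 𝓝 (0 : Y), ‖f (ℓ z) - f a - z‖ ≤ 1 / 2 * ‖z‖ := by
    simpa [hℓ0] using hderiv.isLittleO.def (c := 1 / 2) (by norm_num)
  have hmemU : ∀ᶠ z in 𝓝 (0 : Y), ℓ z ∈ U :=
    hℓ.continuousAt.eventually_mem (hℓ0.symm ▸ hU)
  obtain ⟨R, hR, hball⟩ := nhds_basis_closedBall.eventually_iff.1 (hnear.and hmemU)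
  refine ⟨R / 4, by positivity, R / 4, by positivity, fun g hg hfg y hy => ?_⟩
  obtain ⟨z, hz, hfix⟩ := exists_isFixedPt_of_continuousOn_closedBall
    (h := fun z => z - (g (ℓ z) - y)) hR
    (continuousOn_id.sub ((hg.comp hℓ.continuousOn fun z hz => (hball hz).2).sub
      continuousOn_const)) fun z hz => by
    have hzR := mem_closedBall_zero_iff.1 hz
    rw [mem_closedBall_zero_iff]
    calc ‖z - (g (ℓ z) - y)‖ = ‖(f (ℓ z) - g (ℓ z)) - (f (ℓ z) - f a - z) + (y - f a)‖ := by
          congr 1; abel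
      _ ≤ ‖f (ℓ z) - g (ℓ z)‖ + ‖f (ℓ z) - f a - z‖ + ‖y - f a‖ :=
          (norm_add_le _ _).trans (by gcongr; exact norm_sub_le _ _)
      _ ≤ R / 4 + 1 / 2 * R + R / 4 := by
          gcongr
          exacts [hfg _ (hball hz).2, (hball hz).1.trans (by gcongr), (mem_ball_iff_norm.1 hy).le]
      _ = R := by ring
  exact ⟨ℓ z, (hball hz).2, sub_eq_zero.1 (sub_eq_self.1 hfix)⟩

theorem submersion_image_stable_general {Y : Type*} [NormedAddCommGroup Y] [NormedSpace ℝ Y]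
    [FiniteDimensional ℝ Y] {f : X → Y} {f' : X →L[ℝ] Y} (hf : HasFDerivAt f f' a)
    (hf' : Function.Surjective f') (hU : U ∈ 𝓝 a) :
    ∃ δ > 0, ∃ s > 0, ∀ g : X → Y, ContinuousOn g U → (∀ x ∈ U, ‖f x - g x‖ ≤ δ) →
      ball (f a) s ⊆ g '' U := by
  let e : Y ≃L[ℝ] EuclideanSpace ℝ (Fin (Module.finrank ℝ Y)) := toEuclidean
  obtain ⟨δ, hδ, s, hs, himage⟩ := exists_ball_subset_image_of_surjective_hasFDerivAt
    (e.hasFDerivAt.comp a hf) (e.surjective.comp hf') hU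
  obtain ⟨s', hs', hball⟩ := Metric.mem_nhds_iff.1
    (e.continuous.continuousAt.preimage_mem_nhds (ball_mem_nhds (e (f a)) hs))
  obtain ⟨M, hM0, hM⟩ := e.toContinuousLinearMap.bound
  refine ⟨δ / M, by positivity, s', hs', fun g hg hfg y hy => ?_⟩
  have hclose : ∀ x ∈ U, ‖e (f x) - e (g x)‖ ≤ δ := by
    intro x hx
    rw [← map_sub]
    exact (hM _).trans ((le_div_iff₀' hM0).1 (hfg x hx))
  obtain ⟨x, hx, hxy⟩ := himage (e ∘ g) (e.continuous.comp_continuousOn hg) hclose (hball hy)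
  exact ⟨x, hx, e.injective hxy⟩

end Submersion

/-- Lemma 6.2: if `f` is `C¹` on the ball `B_r ⊆ ℝᴺ`, with `f(0) = 0`
and `Df(0)` of full rank `d` (i.e. surjective), then there are `δ, s > 0` such that any
Lipschitz map `g : ℝᴺ → ℝᵈ` that is uniformly `δ`-close to `f` on `B_r` satisfies
`g(B_r) ⊇ B_s`. -/
theorem submersion_image_stable {N d : ℕ} (r : ℝ) (hr : 0 < r)
    (f : EuclideanSpace ℝ (Fin N) → EuclideanSpace ℝ (Fin d))
    (hf : ContDiffOn ℝ 1 f (ball (0 : EuclideanSpace ℝ (Fin N)) r))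
    (hf0 : f 0 = 0)
    (f' : EuclideanSpace ℝ (Fin N) →L[ℝ] EuclideanSpace ℝ (Fin d))
    (hdf : HasFDerivAt f f' 0)
    (hrank : Function.Surjective f') :
    ∃ δ > (0 : ℝ), ∃ s > (0 : ℝ),
      ∀ (g : EuclideanSpace ℝ (Fin N) → EuclideanSpace ℝ (Fin d)) (K : NNReal),
        LipschitzWith K g →
        (∀ x ∈ ball (0 : EuclideanSpace ℝ (Fin N)) r, ‖f x - g x‖ ≤ δ) →
        ball (0 : EuclideanSpace ℝ (Fin d)) s ⊆ g '' ball (0 : EuclideanSpace ℝ (Fin N)) r := by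
  obtain ⟨δ, hδ, s, hs, himage⟩ := submersion_image_stable_general hdf hrank (ball_mem_nhds 0 hr)
  exact ⟨δ, hδ, s, hs, fun g K hg hfg => hf0 ▸ himage g hg.continuous.continuousOn hfg⟩
end

section
/- (Duality formula (e: rho-def)) Let α be a measurable space, V : α → [0,∞) measurable, β > 0, and let μ₁, μ₂ be probability measures on α with ∫ V dμ₁ < ∞ and ∫ V dμ₂ < ∞. Then ρ_β(μ₁, μ₂) = sup { ∫ φ dμ₁ - ∫ φ dμ₂ : φ : α → ℝ measurable with |φ(x)| ≤ 1 + βV(x) for all x }. -/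
open MeasureTheory

/-- The weighted total-variation metric `ρ_β(μ₁, μ₂) = ∫ (1 + βV) d|μ₁ - μ₂|`, where
`|μ₁ - μ₂|` is the total variation measure of the signed measure `μ₁ - μ₂`. -/
noncomputable def rhoBeta {α : Type*} [MeasurableSpace α] (β : ℝ) (V : α → ℝ)
    (μ₁ μ₂ : Measure α) [IsFiniteMeasure μ₁] [IsFiniteMeasure μ₂] : ℝ :=
  ∫ x, (1 + β * V x) ∂((μ₁.toSignedMeasure - μ₂.toSignedMeasure).totalVariation)

/-! The triangle inequality bounds `∫ φ d(μ₁ - μ₂)` by `∫ |φ| d|μ₁ - μ₂|`, hence by the integral of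
the weight. Equality holds for the weight multiplied by the density of `μ₁ - μ₂` with respect to
`|μ₁ - μ₂|`, which is `1` on a positive Hahn set and `-1` off it. -/

section SignedMeasure

variable {α E : Type*} [MeasurableSpace α] [NormedAddCommGroup E] [NormedSpace ℝ E]

theorem exists_measurable_sign_of_mutuallySingular {μ ν : Measure α}
    (h : μ.MutuallySingular ν) :
    ∃ σ : α → ℝ, Measurable σ ∧ (∀ x, |σ x| = 1) ∧ σ =ᵐ[μ] 1 ∧ σ =ᵐ[ν] -1 := by
  classical
  obtain ⟨N, hN, hμN, hνN⟩ := h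
  refine ⟨N.piecewise (-1) 1, measurable_one.neg.piecewise hN measurable_one, fun x ↦ ?_, ?_, ?_⟩
  · by_cases hx : x ∈ N <;> simp [hx]
  · filter_upwards [measure_eq_zero_iff_ae_notMem.1 hμN] with x hx
    simp [hx]
  · filter_upwards [measure_eq_zero_iff_ae_notMem.1 hνN] with x hx
    simp [Set.notMem_compl_iff.1 hx]

theorem integral_toSignedMeasure_sub {μ ν : Measure α} [IsFiniteMeasure μ] [IsFiniteMeasure ν]
    {f : α → E} (hμ : Integrable f μ) (hν : Integrable f ν) :
    ∫ᵛ x, f x ∂<•(μ.toSignedMeasure - ν.toSignedMeasure) = ∫ x, f x ∂μ - ∫ x, f x ∂ν := by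
  rw [← Measure.variation_toSignedMeasure (μ := μ)] at hμ
  rw [← Measure.variation_toSignedMeasure (μ := ν)] at hν
  simp only [VectorMeasure.integral_sub_vectorMeasure hμ hν,
    VectorMeasure.integral_toSignedMeasure]

theorem integral_eq_integral_posPart_sub_integral_negPart (s : SignedMeasure α) {f : α → E}
    (hf : Integrable f s.totalVariation) :
    ∫ᵛ x, f x ∂<•s =
      ∫ x, f x ∂s.toJordanDecomposition.posPart - ∫ x, f x ∂s.toJordanDecomposition.negPart := by
  obtain ⟨hpos, hneg⟩ := integrable_add_measure.1 hf
  rw [← integral_toSignedMeasure_sub hpos hneg, ← JordanDecomposition.toSignedMeasure,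
    s.toSignedMeasure_toJordanDecomposition]

theorem exists_measurable_sign_integral_smul_eq (s : SignedMeasure α) :
    ∃ σ : α → ℝ, Measurable σ ∧ (∀ x, |σ x| = 1) ∧ ∀ f : α → E, Integrable f s.totalVariation →
      ∫ᵛ x, σ x • f x ∂<•s = ∫ x, f x ∂s.totalVariation := by
  obtain ⟨σ, hσ, hσ_abs, hσ_pos, hσ_neg⟩ :=
    exists_measurable_sign_of_mutuallySingular s.toJordanDecomposition.mutuallySingular
  refine ⟨σ, hσ, hσ_abs, fun f hf ↦ ?_⟩
  have hσf : Integrable (fun x ↦ σ x • f x) s.totalVariation :=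
    hf.bdd_smul 1 hσ.aestronglyMeasurable (.of_forall fun x ↦ (hσ_abs x).le)
  have h_pos : ∫ x, σ x • f x ∂s.toJordanDecomposition.posPart =
      ∫ x, f x ∂s.toJordanDecomposition.posPart :=
    integral_congr_ae <| hσ_pos.mono fun x hx ↦ by simp [hx]
  have h_neg : ∫ x, σ x • f x ∂s.toJordanDecomposition.negPart =
      -∫ x, f x ∂s.toJordanDecomposition.negPart := by
    rw [← integral_neg]
    exact integral_congr_ae <| hσ_neg.mono fun x hx ↦ by simp [hx]
  obtain ⟨hf_pos, hf_neg⟩ := integrable_add_measure.1 hf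
  rw [integral_eq_integral_posPart_sub_integral_negPart s hσf, h_pos, h_neg, sub_neg_eq_add,
    SignedMeasure.totalVariation, integral_add_measure hf_pos hf_neg]

theorem norm_integral_le_integral_totalVariation_of_norm_le (s : SignedMeasure α) {f : α → E}
    {w : α → ℝ} (hw : Integrable w s.totalVariation)
    (hfw : ∀ᵐ x ∂s.totalVariation, ‖f x‖ ≤ w x) :
    ‖∫ᵛ x, f x ∂<•s‖ ≤ ∫ x, w x ∂s.totalVariation := by
  have h_opNorm : ‖(ContinuousLinearMap.lsmul ℝ ℝ : ℝ →L[ℝ] E →L[ℝ] E).flip‖ ≤ 1 :=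
    (ContinuousLinearMap.opNorm_flip _).trans_le ContinuousLinearMap.opNorm_lsmul_le
  calc ‖∫ᵛ x, f x ∂<•s‖
    _ ≤ _ * ∫ x, ‖f x‖ ∂s.variation := VectorMeasure.norm_integral_le_integral_norm
    _ ≤ ∫ x, ‖f x‖ ∂s.totalVariation := by
      rw [← s.totalVariation_eq_variation]
      exact mul_le_of_le_one_left (integral_nonneg fun x ↦ norm_nonneg _) h_opNorm
    _ ≤ ∫ x, w x ∂s.totalVariation :=
      integral_mono_of_nonneg (.of_forall fun x ↦ norm_nonneg _) hw hfw

theorem isGreatest_integral_totalVariation (s : SignedMeasure α) {w : α → ℝ}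
    (hw_meas : Measurable w) (hw_nonneg : ∀ x, 0 ≤ w x) (hw : Integrable w s.totalVariation) :
    IsGreatest {r : ℝ | ∃ φ : α → ℝ, Measurable φ ∧ (∀ x, |φ x| ≤ w x) ∧ r = ∫ᵛ x, φ x ∂<•s}
      (∫ x, w x ∂s.totalVariation) := by
  constructor
  · obtain ⟨σ, hσ, hσ_abs, hσ_int⟩ := exists_measurable_sign_integral_smul_eq (E := ℝ) s
    refine ⟨fun x ↦ σ x • w x, hσ.smul hw_meas, fun x ↦ ?_, (hσ_int w hw).symm⟩
    simp only [smul_eq_mul, abs_mul, hσ_abs, one_mul, abs_of_nonneg (hw_nonneg x), le_refl]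
  · rintro _ ⟨φ, -, hφw, rfl⟩
    exact (Real.le_norm_self _).trans <|
      norm_integral_le_integral_totalVariation_of_norm_le s hw (.of_forall hφw)

end SignedMeasure

theorem totalVariation_toSignedMeasure_sub_le {α : Type*} [MeasurableSpace α] (μ ν : Measure α)
    [IsFiniteMeasure μ] [IsFiniteMeasure ν] :
    (μ.toSignedMeasure - ν.toSignedMeasure).totalVariation ≤ μ + ν := by
  simpa [SignedMeasure.totalVariation_eq_variation] using
    VectorMeasure.variation_sub_le (μ := μ.toSignedMeasure) (ν := ν.toSignedMeasure)

theorem rhoBeta_duality_general {α : Type*} [MeasurableSpace α] {μ₁ μ₂ : Measure α}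
    [IsFiniteMeasure μ₁] [IsFiniteMeasure μ₂] {w : α → ℝ} (hw_meas : Measurable w)
    (hw_nonneg : ∀ x, 0 ≤ w x) (h₁ : Integrable w μ₁) (h₂ : Integrable w μ₂) :
    IsGreatest { r : ℝ | ∃ φ : α → ℝ, Measurable φ ∧ (∀ x, |φ x| ≤ w x) ∧
        r = (∫ x, φ x ∂μ₁) - ∫ x, φ x ∂μ₂ }
      (∫ x, w x ∂(μ₁.toSignedMeasure - μ₂.toSignedMeasure).totalVariation) := by
  have hw : Integrable w (μ₁.toSignedMeasure - μ₂.toSignedMeasure).totalVariation :=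
    (h₁.add_measure h₂).mono_measure (totalVariation_toSignedMeasure_sub_le μ₁ μ₂)
  convert isGreatest_integral_totalVariation _ hw_meas hw_nonneg hw using 5 with r φ
  refine and_congr_right fun hφ ↦ and_congr_right fun hφw ↦ ?_
  rw [integral_toSignedMeasure_sub (h₁.mono' hφ.aestronglyMeasurable (.of_forall hφw))
    (h₂.mono' hφ.aestronglyMeasurable (.of_forall hφw))]

/-- duality formula (e: rho-def):
`ρ_β(μ₁, μ₂) = sup { ∫ φ dμ₁ - ∫ φ dμ₂ : φ measurable, |φ| ≤ 1 + βV }`. -/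
theorem rhoBeta_duality {α : Type*} [MeasurableSpace α] (β : ℝ) (hβ : 0 < β)
    (V : α → ℝ) (hVmeas : Measurable V) (hVpos : ∀ x, 0 ≤ V x)
    (μ₁ μ₂ : Measure α) [IsProbabilityMeasure μ₁] [IsProbabilityMeasure μ₂]
    (h₁ : Integrable V μ₁) (h₂ : Integrable V μ₂) :
    rhoBeta β V μ₁ μ₂ =
      sSup { r : ℝ | ∃ φ : α → ℝ, Measurable φ ∧ (∀ x, |φ x| ≤ 1 + β * V x) ∧
        r = (∫ x, φ x ∂μ₁) - ∫ x, φ x ∂μ₂ } := by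
  have hw_nonneg (x : α) : 0 ≤ 1 + β * V x := by linarith [mul_nonneg hβ.le (hVpos x)]
  exact (rhoBeta_duality_general ((hVmeas.const_mul β).const_add 1) hw_nonneg
    ((integrable_const 1).add (h₁.const_mul β))
    ((integrable_const 1).add (h₂.const_mul β))).csSup_eq.symm
end

section
/- (Anti-concentration of the sine shear displacement; Case 1 of Proposition 9.1) There exists a constant C > 0 such that for every A ≥ 1 and all real numbers a, b with 0 < |a - b| ≤ 1/2, the Lebesgue measure of the set { ζ ∈ [0,1] : |A sin(2π(a - ζ)) - A sin(2π(b - ζ))| < |a - b| } is at most C/A. -/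
open MeasureTheory

/-!
Write `‖x‖` for the distance from `x` to the nearest integer, that is, the norm of `x` in `ℝ / ℤ`.
By sum-to-product the displacement is `2A sin(π(a - b))` times a sine of `π(a + b + 1/2 - 2ζ)`, and
`|sin(πx)| ≥ 2‖x‖`, so it has absolute value at least `8|A| ‖a - b‖ ‖a + b + 1/2 - 2ζ‖`. Hence a bad
shift satisfies `‖a + b + 1/2 - 2ζ‖ ≤ 1/(8|A|)`. As `ζ` runs over a period, `a + b + 1/2 - 2ζ` is
uniformly distributed on the circle, so such `ζ` have measure at most `1/(4|A|)`.
-/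

theorem measurePreserving_coe_addCircle_intCast_mul_add (T : ℝ) [Fact (0 < T)] {n : ℤ} (hn : n ≠ 0)
    (c t : ℝ) :
    MeasurePreserving (fun x : ℝ ↦ ((n * x + c : ℝ) : AddCircle T))
      (volume.restrict (Set.Icc t (t + T))) := by
  have hmk : MeasurePreserving ((↑) : ℝ → AddCircle T) (volume.restrict (Set.Icc t (t + T))) := by
    rw [← Measure.restrict_congr_set Ioc_ae_eq_Icc]
    exact AddCircle.measurePreserving_mk T t
  have hadd : MeasurePreserving (fun u : AddCircle T ↦ u + (c : AddCircle T)) :=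
    measurePreserving_add_right volume _
  simpa only [AddCircle.coe_add, ← zsmul_eq_mul, AddCircle.coe_zsmul, Function.comp_def] using
    hadd.comp ((Measure.measurePreserving_zsmul volume hn).comp hmk)

theorem volume_setOf_norm_coe_addCircle_intCast_mul_add_le (T : ℝ) [Fact (0 < T)] {n : ℤ}
    (hn : n ≠ 0) (c t ε : ℝ) :
    volume {x ∈ Set.Icc t (t + T) | ‖((n * x + c : ℝ) : AddCircle T)‖ ≤ ε} =
      ENNReal.ofReal (min T (2 * ε)) := by
  have hf := measurePreserving_coe_addCircle_intCast_mul_add T hn c t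
  rw [← AddCircle.volume_closedBall T (x := 0),
    ← hf.measure_preimage measurableSet_closedBall.nullMeasurableSet,
    Measure.restrict_apply' measurableSet_Icc]
  congr 1
  ext x
  simp only [Set.mem_ofPred_eq, Set.mem_inter_iff, Set.mem_preimage, mem_closedBall_zero_iff,
    and_comm]

theorem two_mul_norm_coe_unitAddCircle_le_abs_sin_pi_mul (x : ℝ) :
    2 * ‖(x : UnitAddCircle)‖ ≤ |Real.sin (Real.pi * x)| := by
  have hπ := Real.pi_pos
  set r : ℝ := x - round x with hr
  have hr_le : |Real.pi * r| ≤ Real.pi / 2 := by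
    rw [abs_mul, abs_of_pos hπ]
    nlinarith [abs_sub_round x]
  have hsin : |Real.sin (Real.pi * r)| = |Real.sin (Real.pi * x)| := by
    rw [hr, mul_sub, mul_comm Real.pi (round x : ℝ), Real.sin_sub_int_mul_pi, abs_mul,
      abs_neg_one_zpow, one_mul]
  calc 2 * ‖(x : UnitAddCircle)‖ = 2 / Real.pi * |Real.pi * r| := by
        rw [UnitAddCircle.norm_eq, ← hr, abs_mul, abs_of_pos hπ]
        field_simp
    _ ≤ |Real.sin (Real.pi * r)| := Real.mul_abs_le_abs_sin hr_le
    _ = |Real.sin (Real.pi * x)| := hsin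

theorem sin_two_pi_mul_sub_sin_two_pi_mul (x y : ℝ) :
    Real.sin (2 * Real.pi * x) - Real.sin (2 * Real.pi * y) =
      2 * Real.sin (Real.pi * (x - y)) * Real.sin (Real.pi * (x + y + 1 / 2)) := by
  rw [Real.sin_sub_sin, ← Real.sin_add_pi_div_two]
  ring_nf

theorem eight_mul_norm_mul_norm_le_abs_sin_sub_sin (x y : ℝ) :
    8 * ‖((x - y : ℝ) : UnitAddCircle)‖ * ‖((x + y + 1 / 2 : ℝ) : UnitAddCircle)‖ ≤
      |Real.sin (2 * Real.pi * x) - Real.sin (2 * Real.pi * y)| := by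
  rw [sin_two_pi_mul_sub_sin_two_pi_mul, abs_mul, abs_mul, abs_two]
  calc 8 * ‖((x - y : ℝ) : UnitAddCircle)‖ * ‖((x + y + 1 / 2 : ℝ) : UnitAddCircle)‖
      = 2 * (2 * ‖((x - y : ℝ) : UnitAddCircle)‖) *
          (2 * ‖((x + y + 1 / 2 : ℝ) : UnitAddCircle)‖) := by ring
    _ ≤ _ := by gcongr <;> exact two_mul_norm_coe_unitAddCircle_le_abs_sin_pi_mul _

theorem norm_le_of_abs_sine_shear_sub_lt {A a b ζ : ℝ} (hA : A ≠ 0)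
    (h : |A * Real.sin (2 * Real.pi * (a - ζ)) - A * Real.sin (2 * Real.pi * (b - ζ))| <
      ‖((a - b : ℝ) : UnitAddCircle)‖) :
    ‖(((-2 : ℤ) * ζ + (a + b + 1 / 2) : ℝ) : UnitAddCircle)‖ ≤ 1 / (8 * |A|) := by
  have hδ : 0 < ‖((a - b : ℝ) : UnitAddCircle)‖ := (abs_nonneg _).trans_lt h
  have hsin := eight_mul_norm_mul_norm_le_abs_sin_sub_sin (a - ζ) (b - ζ)
  have hsub : a - ζ - (b - ζ) = a - b := by ring
  have hadd : a - ζ + (b - ζ) + 1 / 2 = (-2 : ℤ) * ζ + (a + b + 1 / 2) := by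
    push_cast
    ring
  rw [hsub, hadd] at hsin
  rw [← mul_sub, abs_mul] at h
  rw [le_div_iff₀ (by positivity)]
  refine le_of_mul_le_mul_left ?_ hδ
  linarith [mul_le_mul_of_nonneg_left hsin (abs_nonneg A)]

theorem sine_shear_anticoncentration_general {A : ℝ} (hA : A ≠ 0) (a b t : ℝ) :
    volume {ζ ∈ Set.Icc t (t + 1) |
        |A * Real.sin (2 * Real.pi * (a - ζ)) - A * Real.sin (2 * Real.pi * (b - ζ))|
          < ‖((a - b : ℝ) : UnitAddCircle)‖}
      ≤ ENNReal.ofReal (1 / 4 / |A|) :=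
  calc _ ≤ volume {ζ ∈ Set.Icc t (t + 1) |
          ‖(((-2 : ℤ) * ζ + (a + b + 1 / 2) : ℝ) : UnitAddCircle)‖ ≤ 1 / (8 * |A|)} :=
        measure_mono fun _ hζ ↦ ⟨hζ.1, norm_le_of_abs_sine_shear_sub_lt hA hζ.2⟩
    _ = ENNReal.ofReal (min 1 (2 * (1 / (8 * |A|)))) :=
        volume_setOf_norm_coe_addCircle_intCast_mul_add_le 1 (by decide) _ t _
    _ ≤ ENNReal.ofReal (1 / 4 / |A|) :=
        ENNReal.ofReal_le_ofReal ((min_le_right _ _).trans_eq (by field_simp; norm_num))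

/-- anti-concentration of the sine shear displacement; Case 1 of
Proposition 9.1: there is `C > 0` such that for all `A ≥ 1` and `0 < |a-b| ≤ 1/2`,
the set of shifts `ζ ∈ [0,1]` for which
`|A sin(2π(a-ζ)) - A sin(2π(b-ζ))| < |a-b|` has Lebesgue measure at most `C/A`. -/
theorem sine_shear_anticoncentration :
    ∃ C > (0 : ℝ), ∀ A : ℝ, 1 ≤ A → ∀ a b : ℝ, 0 < |a - b| → |a - b| ≤ 1 / 2 →
      volume {ζ ∈ Set.Icc (0 : ℝ) 1 |
          |A * Real.sin (2 * Real.pi * (a - ζ)) - A * Real.sin (2 * Real.pi * (b - ζ))|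
            < |a - b|}
        ≤ ENNReal.ofReal (C / A) := by
  refine ⟨1 / 4, by norm_num, fun A hA a b _ hab ↦ ?_⟩
  have hnorm : ‖((a - b : ℝ) : UnitAddCircle)‖ = |a - b| :=
    (AddCircle.norm_coe_eq_abs_iff 1 one_ne_zero).2 (by rwa [abs_one])
  have hA_pos : 0 < A := one_pos.trans_le hA
  simpa only [hnorm, zero_add, abs_of_pos hA_pos] using
    sine_shear_anticoncentration_general hA_pos.ne' a b 0
end

section
/- (Core drift inequality of Proposition 9.1: an explicit Lyapunov function for Pierrehumbert flows) For A > 0 and ζ, η ∈ ℝ define S_{A,ζ}, T_{A,η} : ℝ² → ℝ² by S_{A,ζ}(x₁,x₂) = (x₁ + A sin(2π(x₂ - ζ)), x₂) and T_{A,η}(x₁,x₂) = (x₁, x₂ + A sin(2π(x₁ - η))), and set Φ_{A,ζ,η} = T_{A,η} ∘ S_{A,ζ}. Then there exist p ∈ (0,1), c > 0, A₀ ≥ 1, and β ∈ (0,1) such that for every A ≥ A₀ and all x, y ∈ ℝ² with 0 < |x - y|_∞ ≤ c A^{-2}, ∫₀¹ ∫₀¹ |Φ_{A,ζ,η}(x)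 - Φ_{A,ζ,η}(y)|_∞^{-p} dζ dη ≤ β |x - y|_∞^{-p}. -/
/-- The horizontal sinusoidal shear `S_{A,ζ}(x₁,x₂) = (x₁ + A sin(2π(x₂-ζ)), x₂)`. -/
noncomputable def shearS (A ζ : ℝ) (x : ℝ × ℝ) : ℝ × ℝ :=
  (x.1 + A * Real.sin (2 * Real.pi * (x.2 - ζ)), x.2)

/-- The vertical sinusoidal shear `T_{A,η}(x₁,x₂) = (x₁, x₂ + A sin(2π(x₁-η)))`. -/
noncomputable def shearT (A η : ℝ) (x : ℝ × ℝ) : ℝ × ℝ :=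
  (x.1, x.2 + A * Real.sin (2 * Real.pi * (x.1 - η)))

/-- The Pierrehumbert two-step map `Φ_{A,ζ,η} = T_{A,η} ∘ S_{A,ζ}`. -/
noncomputable def pierrehumbertMap (A ζ η : ℝ) (x : ℝ × ℝ) : ℝ × ℝ :=
  shearT A η (shearS A ζ x)

open MeasureTheory Set Real Filter
open scoped ENNReal

/-!
Under a sinusoidal shear with random phase `ζ`, the difference of two points in the sheared
direction is `u + v cos (2π (m - ζ))`, where `|v|` is at least `4A` times their transverse
separation as long as the latter is at most `1 / 2`. This function of `ζ` vanishes to order at most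
two: it dominates `max |u| |v|` times the square of one of two translates of `sin (π ζ)`. Since
`|sin (π ζ)| ^ (-2p)` is integrable for `p < 1 / 2`, averaging over the phase costs only a constant
factor `C`, uniformly in `u` and `v`. Averaging the second shear gains `C (4A) ^ (-p)`, averaging
the first one returns `C |x - y| ^ (-p)`, and `C ^ 2 (4A) ^ (-p)` is small for large `A`.
-/

lemma ennreal_rpow_neg_le_rpow_neg {a b : ℝ≥0∞} (hab : a ≤ b) {q : ℝ} (hq : 0 ≤ q) :
    b ^ (-q) ≤ a ^ (-q) := by
  simpa only [ENNReal.rpow_neg] using ENNReal.inv_le_inv.2 (ENNReal.rpow_le_rpow hab hq)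

lemma enorm_norm_rpow {E : Type*} [NormedAddGroup E] {x : E} (hx : x ≠ 0) (s : ℝ) :
    ‖‖x‖ ^ s‖ₑ = ‖x‖ₑ ^ s := by
  rw [enorm_of_nonneg (rpow_nonneg (norm_nonneg x) s),
    ← ENNReal.ofReal_rpow_of_pos (norm_pos_iff.2 hx), ofReal_norm]

-- At `x = 0` with `s < 0` the left side is the junk value `0` and the right side is `⊤`.
lemma enorm_norm_rpow_le {E : Type*} [NormedAddGroup E] (x : E) (s : ℝ) :
    ‖‖x‖ ^ s‖ₑ ≤ ‖x‖ₑ ^ s := by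
  rcases eq_or_ne x 0 with rfl | hx
  · rcases lt_trichotomy s 0 with hs | rfl | hs
    · simp [hs]
    · simp
    · simp [hs.ne']
  · exact (enorm_norm_rpow hx s).le

lemma lintegral_Ioc_comp_sub_left_of_periodic {f : ℝ → ℝ≥0∞} {T : ℝ} (hT : 0 < T)
    (hf : Function.Periodic f T) (a b c : ℝ) :
    ∫⁻ t in Ioc a (a + T), f (c - t) = ∫⁻ t in Ioc b (b + T), f t := by
  have : Fact (0 < T) := ⟨hT⟩
  calc ∫⁻ t in Ioc a (a + T), f (c - t)
      = ∫⁻ s : AddCircle T, hf.lift (c - s) :=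
        AddCircle.lintegral_preimage T a fun s ↦ hf.lift (c - s)
    _ = ∫⁻ s : AddCircle T, hf.lift s := lintegral_sub_left_eq_self _ _
    _ = ∫⁻ t in Ioc b (b + T), f t := (AddCircle.lintegral_preimage T b hf.lift).symm

lemma enorm_intervalIntegral_intervalIntegral_le {E : Type*} [NormedAddCommGroup E]
    [NormedSpace ℝ E] {a b c d : ℝ} (hab : a ≤ b) (hcd : c ≤ d) (f : ℝ → ℝ → E) :
    ‖∫ s in a..b, ∫ t in c..d, f s t‖ₑ ≤ ∫⁻ s in Ioc a b, ∫⁻ t in Ioc c d, ‖f s t‖ₑ := by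
  simp only [intervalIntegral.integral_of_le hab, intervalIntegral.integral_of_le hcd]
  exact (enorm_integral_le_lintegral_enorm _).trans
    (lintegral_mono fun _ ↦ enorm_integral_le_lintegral_enorm _)

lemma lintegral_enorm_rpow_neg_lt_top {q : ℝ} (hq : q < 1) {s : Set ℝ} (hs : IsCompact s) :
    ∫⁻ t in s, ‖t‖ₑ ^ (-q) < ∞ := by
  have hloc : LocallyIntegrable (fun t : ℝ ↦ ‖t‖ ^ (-q)) :=
    locallyIntegrable_of_norm_le_rpow (C := 1) (α := q) (by simp) (by simpa using hq)
      (.of_forall fun t ↦ by rw [one_mul, norm_of_nonneg (by positivity)])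
      (measurable_norm.pow_const _).aestronglyMeasurable
  have hae : ∀ᵐ t ∂volume.restrict s, ‖‖t‖ ^ (-q)‖ₑ = ‖t‖ₑ ^ (-q) :=
    ae_restrict_of_ae <| (Measure.ae_ne volume 0).mono fun t ht ↦ enorm_norm_rpow ht _
  exact lintegral_congr_ae hae ▸ (hloc.integrableOn_isCompact hs).2

lemma two_mul_abs_le_abs_sin_pi_mul {t : ℝ} (ht : |t| ≤ 1 / 2) : 2 * |t| ≤ |sin (π * t)| := by
  have hpi : |π * t| = π * |t| := by rw [abs_mul, abs_of_pos pi_pos]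
  calc 2 * |t| = 2 / π * |π * t| := by rw [hpi]; field_simp
    _ ≤ |sin (π * t)| := mul_abs_le_abs_sin (by rw [hpi]; nlinarith [pi_pos])

/-- The negative moment `𝔼 |sin (π U)| ^ (-q)` of the sine at a uniform phase `U`. It is taken in
`ℝ≥0∞`, so that finiteness is a statement (true for `q < 1`) rather than a convention. -/
noncomputable def sinNegMoment (q : ℝ) : ℝ≥0∞ :=
  ∫⁻ t in Ioc (0 : ℝ) 1, ‖sin (π * t)‖ₑ ^ (-q)

lemma lintegral_enorm_sin_pi_mul_sub_rpow_neg (q a c : ℝ) :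
    ∫⁻ t in Ioc a (a + 1), ‖sin (π * (c - t))‖ₑ ^ (-q) = sinNegMoment q := by
  have hper : Function.Periodic (fun t ↦ ‖sin (π * t)‖ₑ ^ (-q)) 1 := fun t ↦ by
    simp only [mul_add, mul_one, sin_add_pi, enorm_neg]
  simpa only [sinNegMoment, zero_add] using
    lintegral_Ioc_comp_sub_left_of_periodic one_pos hper a 0 c

lemma sinNegMoment_lt_top {q : ℝ} (hq₀ : 0 ≤ q) (hq : q < 1) : sinNegMoment q < ∞ := by
  rw [← lintegral_enorm_sin_pi_mul_sub_rpow_neg q (-(1 / 2)) 0]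
  calc ∫⁻ t in Ioc (-(1 / 2) : ℝ) (-(1 / 2) + 1), ‖sin (π * (0 - t))‖ₑ ^ (-q)
      ≤ ∫⁻ t in Ioc (-(1 / 2) : ℝ) (-(1 / 2) + 1), ‖t‖ₑ ^ (-q) := by
        refine setLIntegral_mono' measurableSet_Ioc fun t ht ↦ ?_
        refine ennreal_rpow_neg_le_rpow_neg (enorm_le_iff_norm_le.2 ?_) hq₀
        have hsin : 2 * |t| ≤ |sin (π * t)| := two_mul_abs_le_abs_sin_pi_mul
          (abs_le.2 ⟨ht.1.le, by linarith [ht.2]⟩)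
        rw [zero_sub, mul_neg, sin_neg, norm_neg, norm_eq_abs, norm_eq_abs]
        linarith [abs_nonneg t]
    _ ≤ ∫⁻ t in Icc (-(1 / 2) : ℝ) (-(1 / 2) + 1), ‖t‖ₑ ^ (-q) :=
        lintegral_mono_set Ioc_subset_Icc_self
    _ < ∞ := lintegral_enorm_rpow_neg_lt_top hq isCompact_Icc

lemma exists_abs_add_mul_cos_eq {u v : ℝ} (huv : |u| ≤ |v|) :
    ∃ φ : ℝ, ∀ θ : ℝ,
      |u + v * cos (2 * θ)| = 2 * |v| * (|sin (φ + θ)| * |sin (-φ + θ)|) := by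
  have hq : |-(u / v)| ≤ 1 := by
    rw [abs_neg, abs_div]
    exact div_le_one_of_le₀ huv (abs_nonneg v)
  set φ := arccos (-(u / v)) / 2 with hφ
  have hu : u = -(v * cos (2 * φ)) := by
    rw [hφ, mul_div_cancel₀ _ two_ne_zero, cos_arccos (abs_le.1 hq).1 (abs_le.1 hq).2]
    rcases eq_or_ne v 0 with rfl | hv
    · simpa using huv
    · field_simp
  refine ⟨φ, fun θ ↦ ?_⟩
  have hcos : u + v * cos (2 * θ) = -(2 * v * (sin (φ + θ) * sin (-φ + θ))) := by
    have h := cos_sub_cos (2 * θ) (2 * φ)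
    rw [show (2 * θ + 2 * φ) / 2 = φ + θ by ring, show (2 * θ - 2 * φ) / 2 = -φ + θ by ring] at h
    linear_combination hu + v * h
  rw [hcos, abs_neg, abs_mul, abs_mul, abs_mul, abs_two]

lemma sin_sq_or_cos_sq_le_abs_add_mul_cos {u v : ℝ} (hvu : |v| ≤ |u|) (θ : ℝ) :
    2 * |u| * sin θ ^ 2 ≤ |u + v * cos (2 * θ)| ∨
      2 * |u| * cos θ ^ 2 ≤ |u + v * cos (2 * θ)| := by
  have hsub : |u| * (1 - |cos (2 * θ)|) ≤ |u + v * cos (2 * θ)| := by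
    have htri := abs_sub_abs_le_abs_sub u (-(v * cos (2 * θ)))
    rw [abs_neg, sub_neg_eq_add, abs_mul] at htri
    linarith [mul_le_mul_of_nonneg_right hvu (abs_nonneg (cos (2 * θ)))]
  rcases abs_choice (cos (2 * θ)) with hcos | hcos
  · left
    calc 2 * |u| * sin θ ^ 2 = |u| * (1 - |cos (2 * θ)|) := by
          rw [hcos, cos_two_mul, cos_sq']; ring
      _ ≤ _ := hsub
  · right
    calc 2 * |u| * cos θ ^ 2 = |u| * (1 - |cos (2 * θ)|) := by
          rw [hcos, cos_two_mul]; ring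
      _ ≤ _ := hsub

lemma exists_norm_mul_sin_sq_le_abs_add_mul_cos (u v : ℝ) :
    ∃ α β : ℝ, ∀ θ : ℝ,
      ‖(u, v)‖ * sin (α + θ) ^ 2 ≤ |u + v * cos (2 * θ)| ∨
        ‖(u, v)‖ * sin (β + θ) ^ 2 ≤ |u + v * cos (2 * θ)| := by
  simp only [Prod.norm_mk, norm_eq_abs]
  rcases le_total |u| |v| with huv | hvu
  · obtain ⟨φ, hφ⟩ := exists_abs_add_mul_cos_eq huv
    refine ⟨φ, -φ, fun θ ↦ ?_⟩
    rw [hφ, max_eq_right huv, ← sq_abs (sin (φ + θ)), ← sq_abs (sin (-φ + θ)),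
      mul_comm 2, mul_assoc]
    refine (le_total |sin (φ + θ)| |sin (-φ + θ)|).imp (fun h ↦ ?_) (fun h ↦ ?_) <;>
      gcongr <;> nlinarith [abs_nonneg (sin (φ + θ)), abs_nonneg (sin (-φ + θ))]
  · refine ⟨0, π / 2, fun θ ↦ ?_⟩
    rw [zero_add, add_comm (π / 2), sin_add_pi_div_two, max_eq_left hvu]
    refine (sin_sq_or_cos_sq_le_abs_add_mul_cos hvu θ).imp (fun h ↦ ?_) (fun h ↦ ?_)
    · linarith [mul_nonneg (abs_nonneg u) (sq_nonneg (sin θ))]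
    · linarith [mul_nonneg (abs_nonneg u) (sq_nonneg (cos θ))]

lemma enorm_rpow_neg_le_of_norm_mul_sq_le {E : Type*} [SeminormedAddCommGroup E] {z : E}
    {s w p : ℝ} (hp : 0 ≤ p) (h : ‖z‖ * s ^ 2 ≤ |w|) :
    ‖w‖ₑ ^ (-p) ≤ ‖z‖ₑ ^ (-p) * ‖s‖ₑ ^ (-(2 * p)) := by
  have hle : ‖z‖ₑ * ‖s‖ₑ ^ 2 ≤ ‖w‖ₑ := by
    rw [← enorm_norm z, ← enorm_pow, ← enorm_mul, enorm_le_iff_norm_le,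
      norm_of_nonneg (by positivity)]
    exact h
  calc ‖w‖ₑ ^ (-p) ≤ (‖z‖ₑ * ‖s‖ₑ ^ 2) ^ (-p) := ennreal_rpow_neg_le_rpow_neg hle hp
    _ = ‖z‖ₑ ^ (-p) * (‖s‖ₑ ^ 2) ^ (-p) :=
        ENNReal.mul_rpow_of_ne_top enorm_ne_top (ENNReal.pow_ne_top enorm_ne_top) _
    _ = ‖z‖ₑ ^ (-p) * ‖s‖ₑ ^ (-(2 * p)) := by
        rw [← ENNReal.rpow_natCast, ← ENNReal.rpow_mul, Nat.cast_two, mul_neg]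

lemma lintegral_enorm_add_mul_cos_rpow_neg_le {p : ℝ} (hp : 0 ≤ p) (u v m : ℝ) :
    ∫⁻ t in Ioc (0 : ℝ) 1, ‖u + v * cos (2 * (π * (m - t)))‖ₑ ^ (-p)
      ≤ 2 * sinNegMoment (2 * p) * ‖(u, v)‖ₑ ^ (-p) := by
  obtain ⟨α, β, hαβ⟩ := exists_norm_mul_sin_sq_le_abs_add_mul_cos u v
  set g : ℝ → ℝ → ℝ≥0∞ := fun γ t ↦ ‖sin (γ + π * (m - t))‖ₑ ^ (-(2 * p)) with hg
  have hg_meas (γ : ℝ) : Measurable (g γ) := by fun_prop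
  have hg_lintegral (γ : ℝ) : ∫⁻ t in Ioc (0 : ℝ) 1, g γ t = sinNegMoment (2 * p) := by
    have hphase (t : ℝ) : γ + π * (m - t) = π * (γ / π + m - t) := by field_simp; ring
    simp only [hg, hphase]
    simpa only [zero_add] using lintegral_enorm_sin_pi_mul_sub_rpow_neg (2 * p) 0 (γ / π + m)
  have hpointwise (t : ℝ) :
      ‖u + v * cos (2 * (π * (m - t)))‖ₑ ^ (-p) ≤ ‖(u, v)‖ₑ ^ (-p) * (g α t + g β t) := by
    rcases hαβ (π * (m - t)) with h | h
    · exact (enorm_rpow_neg_le_of_norm_mul_sq_le hp h).trans (by gcongr; exact le_self_add)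
    · exact (enorm_rpow_neg_le_of_norm_mul_sq_le hp h).trans (by gcongr; exact le_add_self)
  calc ∫⁻ t in Ioc (0 : ℝ) 1, ‖u + v * cos (2 * (π * (m - t)))‖ₑ ^ (-p)
      ≤ ∫⁻ t in Ioc (0 : ℝ) 1, ‖(u, v)‖ₑ ^ (-p) * (g α t + g β t) := lintegral_mono hpointwise
    _ = ‖(u, v)‖ₑ ^ (-p) * (sinNegMoment (2 * p) + sinNegMoment (2 * p)) := by
        rw [lintegral_const_mul _ (by fun_prop), lintegral_add_left (hg_meas α),
          hg_lintegral, hg_lintegral]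
    _ = 2 * sinNegMoment (2 * p) * ‖(u, v)‖ₑ ^ (-p) := by ring

lemma lintegral_enorm_add_sin_sub_sin_rpow_neg_le {p s t : ℝ} (hp : 0 ≤ p)
    (hst : |s - t| ≤ 1 / 2) (A d : ℝ) :
    ∫⁻ ζ in Ioc (0 : ℝ) 1, ‖d + A * (sin (2 * π * (s - ζ)) - sin (2 * π * (t - ζ)))‖ₑ ^ (-p)
      ≤ 2 * sinNegMoment (2 * p) * ‖(d, 4 * A * (s - t))‖ₑ ^ (-p) := by
  set v := 2 * A * sin (π * (s - t)) with hv
  have hsin (ζ : ℝ) : A * (sin (2 * π * (s - ζ)) - sin (2 * π * (t - ζ)))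
      = v * cos (2 * (π * ((s + t) / 2 - ζ))) := by
    rw [sin_sub_sin, hv]
    ring_nf
  have hv_ge : |4 * A * (s - t)| ≤ |v| := by
    rw [hv, abs_mul, abs_mul, abs_mul, abs_mul, abs_two, abs_of_pos (four_pos (α := ℝ))]
    nlinarith [two_mul_abs_le_abs_sin_pi_mul hst, abs_nonneg A]
  simp only [hsin]
  refine (lintegral_enorm_add_mul_cos_rpow_neg_le hp d v _).trans ?_
  gcongr 2 * sinNegMoment (2 * p) * ?_
  exact ennreal_rpow_neg_le_rpow_neg
    (enorm_le_iff_norm_le.2 (max_le_max le_rfl hv_ge)) hp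

lemma lintegral_enorm_shearS_sub_fst_rpow_neg_le {p A : ℝ} (hp : 0 ≤ p) (hA : 1 ≤ |4 * A|)
    {x y : ℝ × ℝ} (hxy : |x.2 - y.2| ≤ 1 / 2) :
    ∫⁻ ζ in Ioc (0 : ℝ) 1, ‖(shearS A ζ x).1 - (shearS A ζ y).1‖ₑ ^ (-p)
      ≤ 2 * sinNegMoment (2 * p) * ‖x - y‖ₑ ^ (-p) := by
  have hdiff (ζ : ℝ) : (shearS A ζ x).1 - (shearS A ζ y).1
      = (x.1 - y.1) + A * (sin (2 * π * (x.2 - ζ)) - sin (2 * π * (y.2 - ζ))) := by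
    simp only [shearS]
    ring
  have hnorm : ‖x - y‖ ≤ ‖(x.1 - y.1, 4 * A * (x.2 - y.2))‖ := by
    refine max_le_max le_rfl ?_
    rw [norm_mul]
    exact le_mul_of_one_le_left (norm_nonneg _) hA
  simp only [hdiff]
  refine (lintegral_enorm_add_sin_sub_sin_rpow_neg_le hp hxy A _).trans ?_
  gcongr 2 * sinNegMoment (2 * p) * ?_
  exact ennreal_rpow_neg_le_rpow_neg (enorm_le_iff_norm_le.2 hnorm) hp

lemma lintegral_enorm_shearT_sub_rpow_neg_le {p : ℝ} (hp : 0 ≤ p) (A : ℝ) {x y : ℝ × ℝ}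
    (hxy : |x.1 - y.1| ≤ 1 / 2) :
    ∫⁻ η in Ioc (0 : ℝ) 1, ‖shearT A η x - shearT A η y‖ₑ ^ (-p)
      ≤ 2 * sinNegMoment (2 * p) * ‖4 * A‖ₑ ^ (-p) * ‖x.1 - y.1‖ₑ ^ (-p) := by
  have hsnd (η : ℝ) : (shearT A η x - shearT A η y).2
      = (x.2 - y.2) + A * (sin (2 * π * (x.1 - η)) - sin (2 * π * (y.1 - η))) := by
    simp only [shearT, Prod.snd_sub]
    ring
  calc ∫⁻ η in Ioc (0 : ℝ) 1, ‖shearT A η x - shearT A η y‖ₑ ^ (-p)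
      ≤ ∫⁻ η in Ioc (0 : ℝ) 1, ‖(shearT A η x - shearT A η y).2‖ₑ ^ (-p) :=
        lintegral_mono fun η ↦
          ennreal_rpow_neg_le_rpow_neg (enorm_le_iff_norm_le.2 (norm_snd_le _)) hp
    _ ≤ 2 * sinNegMoment (2 * p) * ‖(x.2 - y.2, 4 * A * (x.1 - y.1))‖ₑ ^ (-p) := by
        simp only [hsnd]
        exact lintegral_enorm_add_sin_sub_sin_rpow_neg_le hp hxy A _
    _ ≤ 2 * sinNegMoment (2 * p) * ‖4 * A * (x.1 - y.1)‖ₑ ^ (-p) := by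
        gcongr 2 * sinNegMoment (2 * p) * ?_
        exact ennreal_rpow_neg_le_rpow_neg (enorm_le_iff_norm_le.2 (le_max_right _ _)) hp
    _ = 2 * sinNegMoment (2 * p) * ‖4 * A‖ₑ ^ (-p) * ‖x.1 - y.1‖ₑ ^ (-p) := by
        rw [enorm_mul, ENNReal.mul_rpow_of_ne_top enorm_ne_top enorm_ne_top, ← mul_assoc]

lemma abs_shearS_fst_sub_le (A ζ : ℝ) (x y : ℝ × ℝ) :
    |(shearS A ζ x).1 - (shearS A ζ y).1| ≤ (1 + 2 * π * |A|) * ‖x - y‖ := by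
  have hsin : |sin (2 * π * (x.2 - ζ)) - sin (2 * π * (y.2 - ζ))| ≤ 2 * π * ‖x - y‖ :=
    calc |sin (2 * π * (x.2 - ζ)) - sin (2 * π * (y.2 - ζ))|
        ≤ |2 * π * (x.2 - ζ) - 2 * π * (y.2 - ζ)| := abs_sin_sub_sin_le _ _
      _ = 2 * π * |x.2 - y.2| := by
          rw [← mul_sub, sub_sub_sub_cancel_right, abs_mul, abs_of_pos two_pi_pos]
      _ ≤ 2 * π * ‖x - y‖ := by
          gcongr
          exact norm_snd_le (x - y)
  calc |(shearS A ζ x).1 - (shearS A ζ y).1|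
      = |(x.1 - y.1) + A * (sin (2 * π * (x.2 - ζ)) - sin (2 * π * (y.2 - ζ)))| := by
        simp only [shearS]
        ring_nf
    _ ≤ |x.1 - y.1| + |A| * |sin (2 * π * (x.2 - ζ)) - sin (2 * π * (y.2 - ζ))| :=
        (abs_add_le _ _).trans_eq (by rw [abs_mul])
    _ ≤ ‖x - y‖ + |A| * (2 * π * ‖x - y‖) := by
        gcongr
        exact norm_fst_le (x - y)
    _ = (1 + 2 * π * |A|) * ‖x - y‖ := by ring

lemma lintegral_lintegral_enorm_pierrehumbertMap_sub_rpow_neg_le {p A : ℝ} (hp : 0 ≤ p)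
    (hA : 1 ≤ |4 * A|) {x y : ℝ × ℝ} (hxy : (1 + 2 * π * |A|) * ‖x - y‖ ≤ 1 / 2) :
    ∫⁻ ζ in Ioc (0 : ℝ) 1, ∫⁻ η in Ioc (0 : ℝ) 1,
        ‖pierrehumbertMap A ζ η x - pierrehumbertMap A ζ η y‖ₑ ^ (-p)
      ≤ (2 * sinNegMoment (2 * p)) ^ 2 * ‖4 * A‖ₑ ^ (-p) * ‖x - y‖ₑ ^ (-p) := by
  set C := 2 * sinNegMoment (2 * p)
  have hsnd : |x.2 - y.2| ≤ 1 / 2 := (norm_snd_le (x - y)).trans <|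
    (le_mul_of_one_le_left (norm_nonneg _) (le_add_of_nonneg_right (by positivity))).trans hxy
  calc _ ≤ ∫⁻ ζ in Ioc (0 : ℝ) 1,
          C * ‖4 * A‖ₑ ^ (-p) * ‖(shearS A ζ x).1 - (shearS A ζ y).1‖ₑ ^ (-p) :=
        lintegral_mono fun ζ ↦
          lintegral_enorm_shearT_sub_rpow_neg_le hp A ((abs_shearS_fst_sub_le A ζ x y).trans hxy)
    _ = C * ‖4 * A‖ₑ ^ (-p) *
          ∫⁻ ζ in Ioc (0 : ℝ) 1, ‖(shearS A ζ x).1 - (shearS A ζ y).1‖ₑ ^ (-p) :=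
        lintegral_const_mul _ (by unfold shearS; fun_prop)
    _ ≤ C * ‖4 * A‖ₑ ^ (-p) * (C * ‖x - y‖ₑ ^ (-p)) := by
        gcongr
        exact lintegral_enorm_shearS_sub_fst_rpow_neg_le hp hA hsnd
    _ = C ^ 2 * ‖4 * A‖ₑ ^ (-p) * ‖x - y‖ₑ ^ (-p) := by ring

lemma integral_integral_norm_pierrehumbertMap_sub_rpow_neg_le {p A : ℝ} (hp₀ : 0 ≤ p)
    (hp : p < 1 / 2) (hA : 1 ≤ |4 * A|) {x y : ℝ × ℝ} (hne : 0 < ‖x - y‖)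
    (hxy : (1 + 2 * π * |A|) * ‖x - y‖ ≤ 1 / 2) :
    ∫ ζ in (0 : ℝ)..1, ∫ η in (0 : ℝ)..1,
        ‖pierrehumbertMap A ζ η x - pierrehumbertMap A ζ η y‖ ^ (-p)
      ≤ ((2 * sinNegMoment (2 * p)) ^ 2).toReal * |4 * A| ^ (-p) * ‖x - y‖ ^ (-p) := by
  have hC : (2 * sinNegMoment (2 * p)) ^ 2 ≠ ∞ := ENNReal.pow_ne_top <|
    ENNReal.mul_ne_top ENNReal.ofNat_ne_top
      (sinNegMoment_lt_top (by positivity) (by linarith)).ne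
  have hA₀ : 4 * A ≠ 0 := abs_pos.1 (one_pos.trans_le hA)
  have hbound : ‖∫ ζ in (0 : ℝ)..1, ∫ η in (0 : ℝ)..1,
        ‖pierrehumbertMap A ζ η x - pierrehumbertMap A ζ η y‖ ^ (-p)‖ₑ
      ≤ (2 * sinNegMoment (2 * p)) ^ 2 * ‖4 * A‖ₑ ^ (-p) * ‖x - y‖ₑ ^ (-p) :=
    calc _ ≤ ∫⁻ ζ in Ioc (0 : ℝ) 1, ∫⁻ η in Ioc (0 : ℝ) 1,
            ‖‖pierrehumbertMap A ζ η x - pierrehumbertMap A ζ η y‖ ^ (-p)‖ₑ :=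
          enorm_intervalIntegral_intervalIntegral_le zero_le_one zero_le_one _
      _ ≤ ∫⁻ ζ in Ioc (0 : ℝ) 1, ∫⁻ η in Ioc (0 : ℝ) 1,
            ‖pierrehumbertMap A ζ η x - pierrehumbertMap A ζ η y‖ₑ ^ (-p) :=
          lintegral_mono fun _ ↦ lintegral_mono fun _ ↦ enorm_norm_rpow_le _ _
      _ ≤ _ := lintegral_lintegral_enorm_pierrehumbertMap_sub_rpow_neg_le hp₀ hA hxy
  rw [← enorm_norm_rpow hA₀, ← enorm_norm_rpow (norm_pos_iff.1 hne),
    ← ENNReal.ofReal_toReal hC, ← enorm_of_nonneg ENNReal.toReal_nonneg, ← enorm_mul, ← enorm_mul,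
    enorm_le_iff_norm_le] at hbound
  exact (le_norm_self _).trans (hbound.trans_eq (norm_of_nonneg (by positivity)))

theorem pierrehumbert_drift_general {p : ℝ} (hp : p ∈ Ioo 0 (1 / 2)) {β : ℝ} (hβ : 0 < β) :
    ∃ A₀ : ℝ, 1 ≤ A₀ ∧
      ∀ A : ℝ, A₀ ≤ A → ∀ x y : ℝ × ℝ, 0 < ‖x - y‖ → ‖x - y‖ ≤ 1 / (16 * A) →
        (∫ ζ in (0 : ℝ)..1, ∫ η in (0 : ℝ)..1,
            ‖pierrehumbertMap A ζ η x - pierrehumbertMap A ζ η y‖ ^ (-p))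
          ≤ β * ‖x - y‖ ^ (-p) := by
  set C := ((2 * sinNegMoment (2 * p)) ^ 2).toReal
  have hlim : Tendsto (fun A : ℝ ↦ C * (4 * A) ^ (-p)) atTop (nhds 0) := by
    simpa only [mul_zero, Function.comp_def, id] using ((tendsto_rpow_neg_atTop hp.1).comp
      (tendsto_id.const_mul_atTop four_pos)).const_mul C
  obtain ⟨A₀, hA₀⟩ := eventually_atTop.1 (hlim.eventually_le_const hβ)
  refine ⟨max 1 A₀, le_max_left _ _, fun A hA x y hne hxy ↦ ?_⟩
  have hA₁ : 1 ≤ A := (le_max_left _ _).trans hA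
  have h4A : |4 * A| = 4 * A := abs_of_nonneg (by linarith)
  have hsmall : (1 + 2 * π * |A|) * ‖x - y‖ ≤ 1 / 2 := by
    calc (1 + 2 * π * |A|) * ‖x - y‖ ≤ 8 * A * (1 / (16 * A)) := by
          rw [abs_of_pos (one_pos.trans_le hA₁)]
          gcongr
          nlinarith [pi_lt_d2]
      _ = 1 / 2 := by field_simp; norm_num
  calc _ ≤ C * |4 * A| ^ (-p) * ‖x - y‖ ^ (-p) :=
        integral_integral_norm_pierrehumbertMap_sub_rpow_neg_le hp.1.le hp.2
          (by rw [h4A]; linarith) hne hsmall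
    _ ≤ β * ‖x - y‖ ^ (-p) := by
        rw [h4A]
        gcongr
        exact hA₀ A ((le_max_right _ _).trans hA)

/-- core drift inequality of Proposition 9.1: there exist
`p ∈ (0,1)`, `c > 0`, `A₀ ≥ 1` and `β ∈ (0,1)` such that for every amplitude `A ≥ A₀`
and all `x ≠ y` with `|x-y|_∞ ≤ c A⁻²`, averaging over independent uniform shifts
`ζ, η ∈ [0,1]` gives `E |Φ(x) - Φ(y)|_∞^{-p} ≤ β |x-y|_∞^{-p}`; i.e.
`V(x,y) = |x-y|_∞^{-p}` is a Lyapunov function for the two-point chain near the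
diagonal. (The norm of `ℝ × ℝ` is the `ℓ^∞` norm.) -/
theorem pierrehumbert_drift :
    ∃ p ∈ Set.Ioo (0 : ℝ) 1, ∃ c > (0 : ℝ), ∃ A₀ : ℝ, 1 ≤ A₀ ∧
      ∃ β ∈ Set.Ioo (0 : ℝ) 1,
        ∀ A : ℝ, A₀ ≤ A → ∀ x y : ℝ × ℝ, 0 < ‖x - y‖ → ‖x - y‖ ≤ c / A ^ 2 →
          (∫ ζ in (0 : ℝ)..1, ∫ η in (0 : ℝ)..1,
              ‖pierrehumbertMap A ζ η x - pierrehumbertMap A ζ η y‖ ^ (-p))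
            ≤ β * ‖x - y‖ ^ (-p) := by
  obtain ⟨A₀, hA₀, hdrift⟩ := pierrehumbert_drift_general (p := 1 / 4) (by norm_num) one_half_pos
  refine ⟨1 / 4, by norm_num, 1 / 16, by norm_num, A₀, hA₀, 1 / 2, by norm_num,
    fun A hA x y hne hxy ↦ hdrift A hA x y hne (hxy.trans ?_)⟩
  have hA₁ : 1 ≤ A := hA₀.trans hA
  rw [div_div]
  gcongr
  exact le_self_pow₀ hA₁ two_ne_zero
end
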